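/- arXiv:2510.25482 — 2 statements merged into one kernel-verified Lean document; each statement's English description precedes it below -/
import Mathlib

section
/- Kronecker canonical form: every m×n complex matrix pencil A − λB is strictly equivalent to a direct sum of Kronecker canonical blocks of the forms E_k(μ) with μ ∈ ℂ, E_k(∞), L_k, and L_kᵀ, and this direct sum is uniquely determined up to permutation of the summands. -/
/-!
Basic framework: a complex `m × n` matrix pencil `A - λ B` is formalized as the
pair `(A, B)` of matrices.  We define strict equivalence, congruence,
skew-symmetry, orbits, direct sums, and the cover relations for the orbit
closure hierarchies (in the Euclidean topology).
-/

open Matrix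

noncomputable section

/-- An `m × n` complex matrix pencil `A - λ B`, formalized as the pair `(A, B)`. -/
abbrev Pencil (m n : ℕ) : Type :=
  Matrix (Fin m) (Fin n) ℂ × Matrix (Fin m) (Fin n) ℂ

namespace Pencil

/-- Strict equivalence of matrix pencils: `Q⁻¹ * A * R = C` and `Q⁻¹ * B * R = D`
for some invertible `Q`, `R`. -/
def StrictEquiv {m n : ℕ} (P Q : Pencil m n) : Prop :=
  ∃ (S : Matrix (Fin m) (Fin m) ℂ) (R : Matrix (Fin n) (Fin n) ℂ),
    IsUnit S ∧ IsUnit R ∧ S⁻¹ * P.1 * R = Q.1 ∧ S⁻¹ * P.2 * R = Q.2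

/-- The strict-equivalence orbit of a pencil. -/
def orbE {m n : ℕ} (P : Pencil m n) : Set (Pencil m n) :=
  {Q | StrictEquiv P Q}

/-- A pencil `A - λ B` is skew-symmetric if `Aᵀ = -A` and `Bᵀ = -B`. -/
def IsSkew {n : ℕ} (P : Pencil n n) : Prop :=
  P.1ᵀ = -P.1 ∧ P.2ᵀ = -P.2

/-- Congruence of (square) matrix pencils: `Sᵀ * A * S = C` and `Sᵀ * B * S = D`
for some invertible `S`. -/
def Congruent {n : ℕ} (P Q : Pencil n n) : Prop :=
  ∃ S : Matrix (Fin n) (Fin n) ℂ,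
    IsUnit S ∧ Sᵀ * P.1 * S = Q.1 ∧ Sᵀ * P.2 * S = Q.2

/-- The congruence orbit of a pencil. -/
def orbC {n : ℕ} (P : Pencil n n) : Set (Pencil n n) :=
  {Q | Congruent P Q}

/-- Direct (block-diagonal) sum of two pencils. -/
def dsum {m n p q : ℕ} (P : Pencil m n) (Q : Pencil p q) : Pencil (m + p) (n + q) :=
  ((fromBlocks P.1 0 0 Q.1).submatrix finSumFinEquiv.symm finSumFinEquiv.symm,
   (fromBlocks P.2 0 0 Q.2).submatrix finSumFinEquiv.symm finSumFinEquiv.symm)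

/-- Transport a pencil along equalities of its dimensions. -/
def cast {m n m' n' : ℕ} (hm : m = m') (hn : n = n') (P : Pencil m n) : Pencil m' n' :=
  (P.1.submatrix (finCongr hm.symm) (finCongr hn.symm),
   P.2.submatrix (finCongr hm.symm) (finCongr hn.symm))

/-- `orbE P1` covers `orbE P2` in the closure hierarchy of strict-equivalence
orbits: `P1` is not strictly equivalent to `P2`, `orbE P2 ⊆ closure (orbE P1)`,
and there is no intermediate orbit strictly between them. -/
def CoversE {m n : ℕ} (P1 P2 : Pencil m n) : Prop :=
  ¬ StrictEquiv P1 P2 ∧ orbE P2 ⊆ closure (orbE P1) ∧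
    ¬ ∃ P : Pencil m n, ¬ StrictEquiv P P1 ∧ ¬ StrictEquiv P P2 ∧
        orbE P ⊆ closure (orbE P1) ∧ orbE P2 ⊆ closure (orbE P)

/-- `orbC P1` covers `orbC P2` in the closure hierarchy of congruence orbits of
skew-symmetric pencils: `P1` is not congruent to `P2`,
`orbC P2 ⊆ closure (orbC P1)`, and there is no congruence orbit of a
skew-symmetric pencil strictly between them. -/
def CoversC {n : ℕ} (P1 P2 : Pencil n n) : Prop :=
  ¬ Congruent P1 P2 ∧ orbC P2 ⊆ closure (orbC P1) ∧
    ¬ ∃ P : Pencil n n, IsSkew P ∧ ¬ Congruent P P1 ∧ ¬ Congruent P P2 ∧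
        orbC P ⊆ closure (orbC P1) ∧ orbC P2 ⊆ closure (orbC P)

end Pencil

/-! Canonical building blocks. -/

/-- The `k × k` Jordan block `J_k(μ)`. -/
def Jmat (k : ℕ) (μ : ℂ) : Matrix (Fin k) (Fin k) ℂ :=
  Matrix.of fun i j => if (j : ℕ) = (i : ℕ) then μ else if (j : ℕ) = (i : ℕ) + 1 then 1 else 0

/-- The `k × (k+1)` matrix `F_k` with ones on the superdiagonal. -/
def Fmat (k : ℕ) : Matrix (Fin k) (Fin (k + 1)) ℂ :=
  Matrix.of fun i j => if (j : ℕ) = (i : ℕ) + 1 then 1 else 0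

/-- The `k × (k+1)` matrix `G_k` with ones on the diagonal. -/
def Gmat (k : ℕ) : Matrix (Fin k) (Fin (k + 1)) ℂ :=
  Matrix.of fun i j => if (j : ℕ) = (i : ℕ) then 1 else 0

/-- The Kronecker block `E_k(μ) = J_k(μ) - λ I_k`. -/
def Eblk (k : ℕ) (μ : ℂ) : Pencil k k := (Jmat k μ, 1)

/-- The Kronecker block `E_k(∞) = I_k - λ J_k(0)`. -/
def EInfblk (k : ℕ) : Pencil k k := (1, Jmat k 0)

/-- The Kronecker block `L_k = F_k - λ G_k`. -/
def Lblk (k : ℕ) : Pencil k (k + 1) := (Fmat k, Gmat k)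

/-- The Kronecker block `L_kᵀ = F_kᵀ - λ G_kᵀ`. -/
def LTblk (k : ℕ) : Pencil (k + 1) k := ((Fmat k)ᵀ, (Gmat k)ᵀ)

/-- The skew-symmetric matrix `[[0, X], [-Xᵀ, 0]]`. -/
def skewPair {p q : ℕ} (X : Matrix (Fin p) (Fin q) ℂ) :
    Matrix (Fin (p + q)) (Fin (p + q)) ℂ :=
  (fromBlocks 0 X (-Xᵀ) 0).submatrix finSumFinEquiv.symm finSumFinEquiv.symm

/-- The skew-symmetric canonical block `H_h(μ)` (size `2h × 2h`). -/
def Hblk (h : ℕ) (μ : ℂ) : Pencil (h + h) (h + h) :=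
  (skewPair (Jmat h μ), skewPair (1 : Matrix (Fin h) (Fin h) ℂ))

/-- The skew-symmetric canonical block `K_k = H_k(∞)` (size `2k × 2k`). -/
def Kblk (k : ℕ) : Pencil (k + k) (k + k) :=
  (skewPair (1 : Matrix (Fin k) (Fin k) ℂ), skewPair (Jmat k 0))

/-- The skew-symmetric canonical block `M_m` (size `(2m+1) × (2m+1)`). -/
def Mblk (m : ℕ) : Pencil (m + (m + 1)) (m + (m + 1)) :=
  (skewPair (Fmat m), skewPair (Gmat m))

/-! Kronecker canonical forms as multisets of block descriptors. -/

/-- Descriptor of a Kronecker canonical block. -/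
inductive KBlock : Type
  | E : ℕ → ℂ → KBlock        -- `E_k(μ)`, `μ ∈ ℂ`
  | Einf : ℕ → KBlock          -- `E_k(∞)`
  | L : ℕ → KBlock             -- `L_k`
  | LT : ℕ → KBlock            -- `L_kᵀ`

namespace KBlock

/-- Number of rows of a block. -/
def rows : KBlock → ℕ
  | E k _ => k
  | Einf k => k
  | L k => k
  | LT k => k + 1

/-- Number of columns of a block. -/
def cols : KBlock → ℕ
  | E k _ => k
  | Einf k => k
  | L k => k + 1
  | LT k => k

/-- The index of a block. -/
def idx : KBlock → ℕ
  | E k _ => k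
  | Einf k => k
  | L k => k
  | LT k => k

/-- A block is valid (may occur in a Kronecker canonical form) if Jordan blocks
have size at least one. -/
def valid : KBlock → Prop
  | E k _ => 1 ≤ k
  | Einf k => 1 ≤ k
  | L _ => True
  | LT _ => True

/-- The pencil corresponding to a block descriptor. -/
def toPencil : (b : KBlock) → Pencil b.rows b.cols
  | E k μ => Eblk k μ
  | Einf k => EInfblk k
  | L k => Lblk k
  | LT k => LTblk k

end KBlock

/-- The block `E_k(μ)` for an eigenvalue `μ ∈ ℂ ∪ {∞}`; `none` encodes `∞`. -/
def Eb : Option ℂ → ℕ → KBlock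
  | some μ, k => KBlock.E k μ
  | none, k => KBlock.Einf k

/-- Total number of rows of a list of blocks. -/
def rowsSum : List KBlock → ℕ
  | [] => 0
  | b :: t => b.rows + rowsSum t

/-- Total number of columns of a list of blocks. -/
def colsSum : List KBlock → ℕ
  | [] => 0
  | b :: t => b.cols + colsSum t

/-- The direct sum of the blocks in a list. -/
def pencilOfList : (l : List KBlock) → Pencil (rowsSum l) (colsSum l)
  | [] => (0, 0)
  | b :: t => Pencil.dsum b.toPencil (pencilOfList t)

/-- `s` is the multiset of blocks of a Kronecker canonical form of `P`, i.e. `P`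
is strictly equivalent to the direct sum of the blocks of `s`. -/
def RepresentsE {m n : ℕ} (P : Pencil m n) (s : Multiset KBlock) : Prop :=
  (∀ b ∈ s, b.valid) ∧
  ∃ (l : List KBlock) (hm : rowsSum l = m) (hn : colsSum l = n),
    (l : Multiset KBlock) = s ∧
    Pencil.StrictEquiv (Pencil.cast hm hn (pencilOfList l)) P

/-- Like `RepresentsE`, but also allowing degenerate (empty) blocks such as
`E_0(μ)` among the summands. -/
def WeakRepresentsE {m n : ℕ} (P : Pencil m n) (s : Multiset KBlock) : Prop :=
  ∃ (l : List KBlock) (hm : rowsSum l = m) (hn : colsSum l = n),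
    (l : Multiset KBlock) = s ∧
    Pencil.StrictEquiv (Pencil.cast hm hn (pencilOfList l)) P

/-!
A sequence `x₀ ≠ 0, …, x_k` with `A x₀ = 0` and `A xᵢ₊₁ = B xᵢ` (a chain) is a polynomial null
vector of `A - λB` modulo `λ ^ (k + 1)`. Suppose that `A` is not injective. If `B x_k = 0` for some
chain, then a shortest such chain spans a block `L_k`; otherwise the lengths of chains are bounded,
and a longest chain spans a block `E_{k+1}(0)`. In both cases the extremality of the chain provides
a chain of functionals whose pairing with it is triangular and nondegenerate, so the block is a
direct summand. Over an algebraically closed field a nonzero pencil, or its dual, is brought to this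
situation by moving a suitable point of the projective line to `0`, and existence follows by
induction on the dimension.

For uniqueness, move a point `p` to `0` and consider the Wong sequence `(A⁻¹ B)ʲ 0`. The second
differences of its dimensions count the blocks `E_{j+1}(p)` and `L_j` together. The blocks `L_j`
are counted alone at a point `p` that is not an eigenvalue, and the blocks `L_jᵀ` are counted in the
dual pencil.
-/

open Module

/-- A pencil `A - λB` of linear maps `V → W`, given by the pair `(A, B)`. -/
@[ext]
structure LinPencil (R V W : Type*) [CommRing R] [AddCommGroup V] [Module R V] [AddCommGroup W]
    [Module R W] where
  /-- The coefficient of `1`. -/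
  A : V →ₗ[R] W
  /-- The coefficient of `-λ`. -/
  B : V →ₗ[R] W

namespace LinPencil

section CommRing

variable {R V W V₁ W₁ V₂ W₂ V₃ W₃ : Type*} [CommRing R]
  [AddCommGroup V] [Module R V] [AddCommGroup W] [Module R W]
  [AddCommGroup V₁] [Module R V₁] [AddCommGroup W₁] [Module R W₁]
  [AddCommGroup V₂] [Module R V₂] [AddCommGroup W₂] [Module R W₂]
  [AddCommGroup V₃] [Module R V₃] [AddCommGroup W₃] [Module R W₃]

/-- Morphisms of pencils: pairs of linear maps intertwining both coefficients. -/
structure Hom (P : LinPencil R V W) (Q : LinPencil R V₁ W₁) where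
  /-- The map on domains. -/
  dom : V →ₗ[R] V₁
  /-- The map on codomains. -/
  cod : W →ₗ[R] W₁
  comm_A : ∀ x, cod (P.A x) = Q.A (dom x)
  comm_B : ∀ x, cod (P.B x) = Q.B (dom x)

/-- Strict equivalence of pencils of linear maps. -/
def Iso (P : LinPencil R V W) (Q : LinPencil R V₁ W₁) : Prop :=
  ∃ (e : V ≃ₗ[R] V₁) (f : W ≃ₗ[R] W₁),
    (∀ x, f (P.A x) = Q.A (e x)) ∧ ∀ x, f (P.B x) = Q.B (e x)

/-- `Q` is a retract of `P`: it maps to `P` and back by an automorphism. -/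
def IsRetract (Q : LinPencil R V₁ W₁) (P : LinPencil R V W) : Prop :=
  ∃ (ι : Hom Q P) (π : Hom P Q),
    Function.Bijective (π.dom ∘ₗ ι.dom) ∧ Function.Bijective (π.cod ∘ₗ ι.cod)

/-- The direct sum of two pencils. -/
def prod (P : LinPencil R V W) (Q : LinPencil R V₁ W₁) : LinPencil R (V × V₁) (W × W₁) :=
  ⟨P.A.prodMap Q.A, P.B.prodMap Q.B⟩

/-- The dual pencil, the coordinate-free form of the transposed matrix pencil. -/
def dual (P : LinPencil R V W) : LinPencil R (Dual R W) (Dual R V) :=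
  ⟨P.A.dualMap, P.B.dualMap⟩

theorem Iso.refl (P : LinPencil R V W) : Iso P P :=
  ⟨.refl R V, .refl R W, fun _ => rfl, fun _ => rfl⟩

theorem Iso.of_subsingleton [Subsingleton V] [Subsingleton W] [Subsingleton V₁] [Subsingleton W₁]
    (P : LinPencil R V W) (Q : LinPencil R V₁ W₁) : Iso P Q :=
  ⟨0, 0, fun _ => Subsingleton.elim _ _, fun _ => Subsingleton.elim _ _⟩

variable {P : LinPencil R V W} {Q : LinPencil R V₁ W₁}

theorem Iso.symm (h : Iso P Q) : Iso Q P := by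
  obtain ⟨e, f, hA, hB⟩ := h
  exact ⟨e.symm, f.symm, fun x => by simp [LinearEquiv.symm_apply_eq, hA],
    fun x => by simp [LinearEquiv.symm_apply_eq, hB]⟩

theorem Iso.trans {P' : LinPencil R V₂ W₂} (h : Iso P Q) (h' : Iso Q P') : Iso P P' := by
  obtain ⟨e, f, hA, hB⟩ := h
  obtain ⟨e', f', hA', hB'⟩ := h'
  exact ⟨e.trans e', f.trans f', fun x => by simp [hA, hA'], fun x => by simp [hB, hB']⟩

theorem Iso.prod {P' : LinPencil R V₂ W₂} {Q' : LinPencil R V₃ W₃} (h : Iso P P')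
    (h' : Iso Q Q') : Iso (P.prod Q) (P'.prod Q') := by
  obtain ⟨e, f, hA, hB⟩ := h
  obtain ⟨e', f', hA', hB'⟩ := h'
  exact ⟨e.prodCongr e', f.prodCongr f', fun x => by simp [LinPencil.prod, hA, hA'],
    fun x => by simp [LinPencil.prod, hB, hB']⟩

theorem Iso.dual (h : Iso P Q) : Iso P.dual Q.dual := by
  obtain ⟨e, f, hA, hB⟩ := h
  refine Iso.symm ⟨f.dualMap, e.dualMap, fun s => ?_, fun s => ?_⟩
  · ext x
    simp [LinPencil.dual, hA]
  · ext x
    simp [LinPencil.dual, hB]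

theorem dual_prod (P : LinPencil R V W) (Q : LinPencil R V₁ W₁) :
    Iso (P.dual.prod Q.dual) (P.prod Q).dual :=
  ⟨dualProdDualEquivDual R W W₁, dualProdDualEquivDual R V V₁,
    fun s => by ext <;> simp [LinPencil.prod, LinPencil.dual],
    fun s => by ext <;> simp [LinPencil.prod, LinPencil.dual]⟩

theorem iso_dual_dual [IsReflexive R V] [IsReflexive R W] (P : LinPencil R V W) :
    Iso P P.dual.dual :=
  ⟨evalEquiv R V, evalEquiv R W, fun _ => rfl, fun _ => rfl⟩

theorem IsRetract.congr {P' : LinPencil R V₂ W₂} {Q' : LinPencil R V₃ W₃} (h : IsRetract Q P)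
    (hQ : Iso Q Q') (hP : Iso P P') : IsRetract Q' P' := by
  obtain ⟨ι, π, hdom, hcod⟩ := h
  obtain ⟨e, f, hA, hB⟩ := hP
  obtain ⟨e', f', hA', hB'⟩ := hQ.symm
  refine ⟨⟨e.toLinearMap ∘ₗ ι.dom ∘ₗ e'.toLinearMap, f.toLinearMap ∘ₗ ι.cod ∘ₗ f'.toLinearMap,
      fun x => by simp [hA', ι.comm_A, hA], fun x => by simp [hB', ι.comm_B, hB]⟩,
    ⟨e'.symm.toLinearMap ∘ₗ π.dom ∘ₗ e.symm.toLinearMap,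
      f'.symm.toLinearMap ∘ₗ π.cod ∘ₗ f.symm.toLinearMap, fun x => ?_, fun x => ?_⟩, ?_, ?_⟩
  · obtain ⟨y, rfl⟩ := e.surjective x
    simp [← hA, π.comm_A, LinearEquiv.symm_apply_eq, hA']
  · obtain ⟨y, rfl⟩ := e.surjective x
    simp [← hB, π.comm_B, LinearEquiv.symm_apply_eq, hB']
  · simpa [Function.comp_def] using (e'.symm.bijective.comp hdom).comp e'.bijective
  · simpa [Function.comp_def] using (f'.symm.bijective.comp hcod).comp f'.bijective

/-- The dual of a morphism of pencils. -/
def Hom.dual (φ : Hom P Q) : Hom Q.dual P.dual where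
  dom := φ.cod.dualMap
  cod := φ.dom.dualMap
  comm_A s := by
    ext x
    simp [LinPencil.dual, φ.comm_A]
  comm_B s := by
    ext x
    simp [LinPencil.dual, φ.comm_B]

theorem IsRetract.dual (h : IsRetract Q P) : IsRetract Q.dual P.dual := by
  obtain ⟨ι, π, hdom, hcod⟩ := h
  exact ⟨π.dual, ι.dual, (LinearEquiv.ofBijective _ hcod).dualMap.bijective,
    (LinearEquiv.ofBijective _ hdom).dualMap.bijective⟩

theorem bijective_coprod_ker_subtype {i : V →ₗ[R] W} {q : W →ₗ[R] V}
    (h : Function.Bijective (q ∘ₗ i)) :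
    Function.Bijective (i.coprod (LinearMap.ker q).subtype) := by
  constructor
  · rw [injective_iff_map_eq_zero]
    rintro ⟨a, b, hb⟩ hab
    have hab' : i a + b = 0 := by simpa using hab
    have ha : a = 0 := (injective_iff_map_eq_zero _).1 h.1 a <| by
      simpa [LinearMap.mem_ker.1 hb] using congrArg q hab'
    simpa [ha] using hab'
  · intro y
    obtain ⟨a, ha⟩ := h.2 (q y)
    have ha' : q (i a) = q y := ha
    exact ⟨(a, ⟨y - i a, by simp [ha']⟩), by simp⟩

theorem IsRetract.exists_iso_prod (h : IsRetract Q P) :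
    ∃ (V' : Submodule R V) (W' : Submodule R W) (P' : LinPencil R V' W'), Iso P (Q.prod P') := by
  obtain ⟨ι, π, hdom, hcod⟩ := h
  have hA : ∀ x ∈ LinearMap.ker π.dom, P.A x ∈ LinearMap.ker π.cod := fun x hx => by
    rw [LinearMap.mem_ker] at hx ⊢
    rw [π.comm_A, hx, map_zero]
  have hB : ∀ x ∈ LinearMap.ker π.dom, P.B x ∈ LinearMap.ker π.cod := fun x hx => by
    rw [LinearMap.mem_ker] at hx ⊢
    rw [π.comm_B, hx, map_zero]
  refine ⟨_, _, ⟨P.A.restrict hA, P.B.restrict hB⟩,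
    Iso.symm ⟨.ofBijective _ (bijective_coprod_ker_subtype hdom),
      .ofBijective _ (bijective_coprod_ker_subtype hcod), fun x => ?_, fun x => ?_⟩⟩
  · simp [LinPencil.prod, ι.comm_A]
  · simp [LinPencil.prod, ι.comm_B]

/-- The change of parameter moving the point `p` of the projective line to `0`; `none` is `∞`. -/
def reparam : Option R → LinPencil R V W → LinPencil R V W
  | some μ, P => ⟨P.A - μ • P.B, P.B⟩
  | none, P => ⟨P.B, P.A⟩

theorem reparam_neg_reparam (p : Option R) (P : LinPencil R V W) :
    reparam (p.map Neg.neg) (reparam p P) = P := by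
  cases p <;> simp [reparam]

theorem reparam_reparam_neg (p : Option R) (P : LinPencil R V W) :
    reparam p (reparam (p.map Neg.neg) P) = P := by
  cases p <;> simp [reparam]

theorem reparam_prod (p : Option R) (P : LinPencil R V W) (Q : LinPencil R V₁ W₁) :
    reparam p (P.prod Q) = (reparam p P).prod (reparam p Q) := by
  cases p
  · rfl
  · ext <;> simp [reparam, LinPencil.prod]

theorem reparam_dual (p : Option R) (P : LinPencil R V W) :
    reparam p P.dual = (reparam p P).dual := by
  cases p
  · rfl
  · ext <;> simp [reparam, LinPencil.dual]

/-- The morphism between reparametrized pencils with the same underlying linear maps. -/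
def Hom.reparam (φ : Hom P Q) (p : Option R) : Hom (reparam p P) (reparam p Q) where
  dom := φ.dom
  cod := φ.cod
  comm_A x := by cases p <;> simp [LinPencil.reparam, φ.comm_A, φ.comm_B]
  comm_B x := by cases p <;> simp [LinPencil.reparam, φ.comm_A, φ.comm_B]

theorem Iso.reparam (h : Iso P Q) (p : Option R) : Iso (reparam p P) (reparam p Q) := by
  obtain ⟨e, f, hA, hB⟩ := h
  let φ : Hom P Q := ⟨e, f, hA, hB⟩
  exact ⟨e, f, (φ.reparam p).comm_A, (φ.reparam p).comm_B⟩

theorem IsRetract.reparam (h : IsRetract Q P) (p : Option R) :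
    IsRetract (reparam p Q) (reparam p P) := by
  obtain ⟨ι, π, hdom, hcod⟩ := h
  exact ⟨ι.reparam p, π.reparam p, hdom, hcod⟩

section Blocks

variable (R)

/-- The pencil of the Kronecker block `L_k`. -/
def singularBlock (k : ℕ) : LinPencil R (Fin (k + 1) → R) (Fin k → R) :=
  ⟨LinearMap.funLeft R R Fin.succ, LinearMap.funLeft R R Fin.castSucc⟩

/-- The pencil of the Kronecker block `L_kᵀ`. -/
def cosingularBlock (k : ℕ) : LinPencil R (Fin k → R) (Fin (k + 1) → R) :=
  ⟨Function.ExtendByZero.linearMap R Fin.succ, Function.ExtendByZero.linearMap R Fin.castSucc⟩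

/-- The pencil of the Kronecker block `E_{k+1}(0)`. -/
def nilpotentBlock (k : ℕ) : LinPencil R (Fin (k + 1) → R) (Fin (k + 1) → R) :=
  ⟨Function.ExtendByZero.linearMap R Fin.castSucc ∘ₗ LinearMap.funLeft R R Fin.succ, .id⟩

variable {R}

/-- The pencil of the Kronecker block `E_{k+1}(p)`, where `none` is the point `∞`. -/
def jordanBlock (p : Option R) (k : ℕ) : LinPencil R (Fin (k + 1) → R) (Fin (k + 1) → R) :=
  reparam (p.map Neg.neg) (nilpotentBlock R k)

@[simp]
theorem singularBlock_A_apply (k : ℕ) (x : Fin (k + 1) → R) (i : Fin k) :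
    (singularBlock R k).A x i = x i.succ := rfl

@[simp]
theorem singularBlock_B_apply (k : ℕ) (x : Fin (k + 1) → R) (i : Fin k) :
    (singularBlock R k).B x i = x i.castSucc := rfl

@[simp]
theorem nilpotentBlock_A_castSucc (k : ℕ) (x : Fin (k + 1) → R) (i : Fin k) :
    (nilpotentBlock R k).A x i.castSucc = x i.succ :=
  (Fin.castSucc_injective k).extend_apply _ _ i

@[simp]
theorem nilpotentBlock_A_last (k : ℕ) (x : Fin (k + 1) → R) :
    (nilpotentBlock R k).A x (Fin.last k) = 0 :=
  Function.extend_apply' _ _ _ (by simp [Fin.castSucc_ne_last])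

@[simp]
theorem nilpotentBlock_B_apply (k : ℕ) (x : Fin (k + 1) → R) : (nilpotentBlock R k).B x = x := rfl

theorem iso_reparam_jordanBlock (p : Option R) (k : ℕ) :
    Iso (reparam p (jordanBlock p k)) (nilpotentBlock R k) := by
  rw [jordanBlock, reparam_reparam_neg]
  exact .refl _

theorem extend_zero_dotProduct {m n : Type*} [Fintype m] [Fintype n] {s : m → n}
    (hs : Function.Injective s) (x : m → R) (y : n → R) :
    Function.extend s x 0 ⬝ᵥ y = x ⬝ᵥ y ∘ s := by
  refine (Fintype.sum_of_injective s hs _ _ (fun j hj => ?_) fun i => ?_).symm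
  · rw [Function.extend_apply' _ _ _ hj, Pi.zero_apply, zero_mul]
  · rw [hs.extend_apply, Function.comp_apply]

theorem cosingularBlock_iso_dual (k : ℕ) : Iso (cosingularBlock R k) (singularBlock R k).dual :=
  ⟨dotProductEquiv R _, dotProductEquiv R _,
    fun x => LinearMap.ext fun y => extend_zero_dotProduct (Fin.succ_injective k) x y,
    fun x => LinearMap.ext fun y => extend_zero_dotProduct (Fin.castSucc_injective k) x y⟩

theorem nilpotentBlock_iso_dual (k : ℕ) : Iso (nilpotentBlock R k) (nilpotentBlock R k).dual := by
  let e := LinearEquiv.funCongrLeft R R Fin.revPerm ≪≫ₗ dotProductEquiv R (Fin (k + 1))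
  refine ⟨e, e, fun x => LinearMap.ext fun y => ?_, fun x => rfl⟩
  calc
    e ((nilpotentBlock R k).A x) y = ∑ i, (nilpotentBlock R k).A x i.rev * y i := rfl
    _ = ∑ i : Fin k, x i.rev.succ * y i.succ := by
      rw [Fin.sum_univ_succ]
      simp [Fin.rev_succ]
    _ = ∑ i, x i.rev * (nilpotentBlock R k).A y i := by
      rw [Fin.sum_univ_castSucc]
      simp [Fin.rev_castSucc]

theorem jordanBlock_iso_dual (p : Option R) (k : ℕ) :
    Iso (jordanBlock p k) (jordanBlock p k).dual := by
  rw [jordanBlock, ← reparam_dual]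
  exact (nilpotentBlock_iso_dual k).reparam _

open Polynomial in
/-- The matrix of coefficients of the polynomials `(X + μ) ^ i`. -/
def shiftMatrix (μ : R) (n : ℕ) : Matrix (Fin n) (Fin n) R :=
  .of fun i j => ((X + C μ) ^ (i : ℕ)).coeff j

theorem det_shiftMatrix (μ : R) (n : ℕ) : (shiftMatrix μ n).det = 1 := by
  nontriviality R
  have hlower : (shiftMatrix μ n).IsLowerTriangular := fun i j hij =>
    Polynomial.coeff_eq_zero_of_natDegree_lt
      ((Polynomial.natDegree_pow_X_add_C _ μ).trans_lt hij)
  rw [Matrix.det_of_isLowerTriangular _ hlower]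
  refine Finset.prod_eq_one fun i _ => ?_
  simpa [Polynomial.natDegree_pow_X_add_C, shiftMatrix] using
    ((Polynomial.monic_X_add_C μ).pow i).coeff_natDegree

theorem shiftMatrix_mulVec_castSucc (μ : R) (k : ℕ) (x : Fin (k + 1) → R) (i : Fin k) :
    (shiftMatrix μ (k + 1) *ᵥ x) i.castSucc = (shiftMatrix μ k *ᵥ x ∘ Fin.castSucc) i := by
  nontriviality R
  have hlast : ((Polynomial.X + Polynomial.C μ) ^ (i : ℕ)).coeff k = 0 :=
    Polynomial.coeff_eq_zero_of_natDegree_lt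
      ((Polynomial.natDegree_pow_X_add_C _ μ).trans_lt i.2)
  simp [Matrix.mulVec, dotProduct, shiftMatrix, Fin.sum_univ_castSucc (n := k), hlast]

theorem shiftMatrix_mulVec_succ (μ : R) (k : ℕ) (x : Fin (k + 1) → R) (i : Fin k) :
    (shiftMatrix μ (k + 1) *ᵥ x) i.succ =
      (shiftMatrix μ k *ᵥ (x ∘ Fin.succ + μ • x ∘ Fin.castSucc)) i := by
  rw [Matrix.mulVec_add, Matrix.mulVec_smul, Pi.add_apply, Pi.smul_apply,
    ← shiftMatrix_mulVec_castSucc]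
  set q := (Polynomial.X + Polynomial.C μ) ^ (i : ℕ) with hq
  calc
    (shiftMatrix μ (k + 1) *ᵥ x) i.succ =
        ∑ j : Fin (k + 1), ((q * Polynomial.X).coeff j * x j + μ * (q.coeff j * x j)) := by
      rw [Matrix.mulVec, dotProduct]
      refine Finset.sum_congr rfl fun j _ => ?_
      rw [shiftMatrix, Matrix.of_apply, Fin.val_succ, pow_succ, ← hq, mul_add,
        Polynomial.coeff_add, Polynomial.coeff_mul_C]
      ring
    _ = ∑ j : Fin k, q.coeff j * x j.succ + μ * ∑ j : Fin (k + 1), q.coeff j * x j := by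
      rw [Finset.sum_add_distrib, ← Finset.mul_sum, Fin.sum_univ_succ (n := k)]
      simp

-- Multiplication by `X + μ` has in the basis of the powers of `X + μ` the matrix that
-- multiplication by `X` has in the monomial basis.
theorem iso_reparam_some_singularBlock (μ : R) (k : ℕ) :
    Iso (reparam (some μ) (singularBlock R k)) (singularBlock R k) := by
  have hunit (n : ℕ) : IsUnit (shiftMatrix (-μ) n).det := by simp [det_shiftMatrix]
  refine ⟨(shiftMatrix (-μ) _).toLinearEquiv' (Matrix.invertibleOfIsUnitDet _ (hunit _)),
    (shiftMatrix (-μ) _).toLinearEquiv' (Matrix.invertibleOfIsUnitDet _ (hunit _)),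
    fun x => funext fun i => ?_, fun x => funext fun i => ?_⟩
  · have hA : (reparam (some μ) (singularBlock R k)).A x =
        x ∘ Fin.succ + (-μ) • x ∘ Fin.castSucc := by
      ext
      simp [reparam, sub_eq_add_neg]
    rw [hA]
    exact (shiftMatrix_mulVec_succ (-μ) k x i).symm
  · exact (shiftMatrix_mulVec_castSucc (-μ) k x i).symm

theorem iso_reparam_singularBlock (p : Option R) (k : ℕ) :
    Iso (reparam p (singularBlock R k)) (singularBlock R k) := by
  cases p with
  | some μ => exact iso_reparam_some_singularBlock μ k
  | none =>
    refine ⟨.funCongrLeft R R Fin.revPerm, .funCongrLeft R R Fin.revPerm,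
      fun x => funext fun i => ?_, fun x => funext fun i => ?_⟩
    · simp [reparam, LinearMap.funLeft_apply, Fin.rev_succ]
    · simp [reparam, LinearMap.funLeft_apply, Fin.rev_castSucc]

theorem iso_reparam_cosingularBlock (p : Option R) (k : ℕ) :
    Iso (reparam p (cosingularBlock R k)) (cosingularBlock R k) := by
  have h := (cosingularBlock_iso_dual (R := R) k).reparam p
  rw [reparam_dual] at h
  exact h.trans <| (iso_reparam_singularBlock p k).dual.trans (cosingularBlock_iso_dual k).symm

end Blocks

section Wong

/-- The Wong sequence `(A⁻¹ B)ʲ 0`: the end points of the sequences `0 = y₀, …, yⱼ` with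
`A yᵢ₊₁ = B yᵢ`. -/
def wong (P : LinPencil R V W) : ℕ → Submodule R V
  | 0 => ⊥
  | j + 1 => ((P.wong j).map P.B).comap P.A

theorem wong_mono (P : LinPencil R V W) : Monotone P.wong :=
  monotone_nat_of_le_succ fun j => by
    induction j with
    | zero => exact bot_le
    | succ j ih => exact Submodule.comap_mono (Submodule.map_mono ih)

theorem exists_seq_of_mem_wong {j : ℕ} {v : V} (h : v ∈ P.wong j) :
    ∃ y : ℕ → V, y 0 = 0 ∧ (∀ i < j, P.A (y (i + 1)) = P.B (y i)) ∧ y j = v := by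
  induction j generalizing v with
  | zero => exact ⟨fun _ => v, h, by simp, rfl⟩
  | succ j ih =>
    obtain ⟨w, hw, hwv⟩ := h
    obtain ⟨y, hy0, hy, rfl⟩ := ih hw
    refine ⟨Function.update y (j + 1) v, by simp [hy0], fun i hi => ?_, by simp⟩
    rw [Function.update_of_ne hi.ne]
    rcases Nat.lt_succ_iff_lt_or_eq.1 hi with hij | rfl
    · rw [Function.update_of_ne (by omega), hy i hij]
    · rw [Function.update_self, hwv]

theorem wong_eq_bot (h : Function.Injective P.A) (j : ℕ) : P.wong j = ⊥ := by
  induction j with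
  | zero => rfl
  | succ j ih => rw [wong, ih, Submodule.map_bot, Submodule.comap_bot, LinearMap.ker_eq_bot.2 h]

theorem wong_prod (P : LinPencil R V W) (Q : LinPencil R V₁ W₁) (j : ℕ) :
    (P.prod Q).wong j = (P.wong j).prod (Q.wong j) := by
  induction j with
  | zero => exact Submodule.prod_bot.symm
  | succ j ih =>
    ext ⟨v, w⟩
    simp only [wong, ih, Submodule.mem_comap, Submodule.mem_map, Submodule.mem_prod]
    constructor
    · rintro ⟨⟨v', w'⟩, ⟨hv', hw'⟩, h⟩
      exact ⟨⟨v', hv', congrArg Prod.fst h⟩, w', hw', congrArg Prod.snd h⟩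
    · rintro ⟨⟨v', hv', hv⟩, w', hw', hw⟩
      exact ⟨(v', w'), ⟨hv', hw'⟩, Prod.ext hv hw⟩

theorem wong_map {e : V ≃ₗ[R] V₁} {f : W ≃ₗ[R] W₁} (hA : ∀ x, f (P.A x) = Q.A (e x))
    (hB : ∀ x, f (P.B x) = Q.B (e x)) (j : ℕ) :
    (P.wong j).map e.toLinearMap = Q.wong j := by
  induction j with
  | zero => exact Submodule.map_bot _
  | succ j ih =>
    ext v
    obtain ⟨x, rfl⟩ := e.surjective v
    simp [wong, ← ih, ← hA, ← hB, -Submodule.mem_map_equiv]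

theorem Iso.finrank_wong (h : Iso P Q) (j : ℕ) : finrank R (P.wong j) = finrank R (Q.wong j) := by
  obtain ⟨e, f, hA, hB⟩ := h
  rw [← wong_map hA hB]
  exact (LinearEquiv.finrank_map_eq e _).symm

variable (R)

/-- The vectors supported on the first `j` coordinates. -/
def firstCoords (n j : ℕ) : Submodule R (Fin n → R) :=
  ⨅ i ∈ {i : Fin n | j ≤ i}, LinearMap.ker (LinearMap.proj i)

variable {R}

theorem mem_firstCoords {n j : ℕ} {x : Fin n → R} :
    x ∈ firstCoords R n j ↔ ∀ i : Fin n, j ≤ i → x i = 0 := by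
  simp [firstCoords]

theorem finrank_firstCoords [Nontrivial R] (n j : ℕ) :
    finrank R (firstCoords R n j) = min j n := by
  have e := LinearMap.iInfKerProjEquiv R (fun _ : Fin n => R) (I := {i | (i : ℕ) < j})
    (J := {i | j ≤ (i : ℕ)}) (Set.disjoint_left.2 fun _ (h : _ < j) => h.not_ge)
    fun i _ => lt_or_ge (i : ℕ) j
  rw [firstCoords, e.finrank_eq, finrank_fintype_fun_eq_card]
  simp [Fintype.card_subtype, Fin.card_filter_val_lt, min_comm]

theorem wong_nilpotentBlock (k j : ℕ) :
    (nilpotentBlock R k).wong j = firstCoords R (k + 1) j := by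
  induction j with
  | zero =>
    ext x
    simp [wong, mem_firstCoords, funext_iff]
  | succ j ih =>
    ext x
    simp only [wong, ih, Submodule.mem_comap, Submodule.mem_map, nilpotentBlock_B_apply,
      exists_eq_right, mem_firstCoords]
    constructor
    · intro h i hi
      obtain ⟨i, rfl⟩ := Fin.exists_succ_eq.2 (show i ≠ 0 by rintro rfl; simp at hi)
      simpa using h i.castSucc (by simpa using hi)
    · intro h i hi
      induction i using Fin.lastCases with
      | last => simp
      | cast i => simpa using h i.succ (by simpa using hi)

theorem wong_singularBlock (k j : ℕ) :
    (singularBlock R k).wong j = firstCoords R (k + 1) j := by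
  induction j with
  | zero =>
    ext x
    simp [wong, mem_firstCoords, funext_iff]
  | succ j ih =>
    ext x
    simp only [wong, ih, Submodule.mem_comap, Submodule.mem_map, mem_firstCoords]
    constructor
    · rintro ⟨y, hy, hyx⟩ i hi
      obtain ⟨i, rfl⟩ := Fin.exists_succ_eq.2 (show i ≠ 0 by rintro rfl; simp at hi)
      exact (congrFun hyx i).symm.trans (hy i.castSucc (by simpa using hi))
    · intro h
      refine ⟨(nilpotentBlock R k).A x, fun i hi => ?_, funext fun i => by simp⟩
      induction i using Fin.lastCases with
      | last => simp
      | cast i => simpa using h i.succ (by simpa using hi)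

end Wong

section Chains

/-- A chain of length `k`: the coefficients of a nonzero polynomial null vector of `A - λB`
modulo `λ ^ (k + 1)`. -/
structure IsChain (P : LinPencil R V W) (k : ℕ) (x : ℕ → V) : Prop where
  ne_zero : x 0 ≠ 0
  A_zero : P.A (x 0) = 0
  A_succ : ∀ i < k, P.A (x (i + 1)) = P.B (x i)

/-- A closed chain: the coefficients of a polynomial null vector of degree at most `k` of
`A - λB`. -/
structure IsClosedChain (P : LinPencil R V W) (k : ℕ) (x : ℕ → V) : Prop
    extends IsChain P k x where
  B_last : P.B (x k) = 0

variable {k : ℕ} {x : ℕ → V}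

theorem IsChain.of_le {l : ℕ} (h : P.IsChain k x) (hl : l ≤ k) : P.IsChain l x :=
  ⟨h.ne_zero, h.A_zero, fun i hi => h.A_succ i (hi.trans_le hl)⟩

theorem IsChain.mem_wong (h : P.IsChain k x) : x k ∈ P.wong (k + 1) := by
  induction k with
  | zero => simp [wong, h.A_zero]
  | succ k ih => exact ⟨x k, ih (h.of_le k.le_succ), (h.A_succ k k.lt_succ_self).symm⟩

-- Subtracting a sequence that starts at `0` and ends at `x k` gives a chain that reaches `0`.
theorem IsChain.exists_isClosedChain (h : P.IsChain k x) (hk : x k ∈ P.wong k) :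
    ∃ l y, P.IsClosedChain l y := by
  obtain ⟨y, hy0, hy, hyk⟩ := exists_seq_of_mem_wong hk
  have hz : P.IsChain k (x - y) :=
    ⟨by simp [hy0, h.ne_zero], by simp [hy0, h.A_zero],
      fun i hi => by simp [h.A_succ i hi, hy i hi]⟩
  have hzk : (x - y) k = 0 := sub_eq_zero.2 hyk.symm
  obtain _ | l := k
  · exact absurd hzk hz.ne_zero
  · refine ⟨l, x - y, hz.of_le l.le_succ, ?_⟩
    rw [← hz.A_succ l l.lt_succ_self, hzk, map_zero]

theorem exists_forall_not_isChain [IsNoetherian R V] (P : LinPencil R V W)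
    (h : ¬ ∃ l y, P.IsClosedChain l y) : ∃ k, ∀ x, ¬ P.IsChain k x := by
  obtain ⟨k, hk⟩ := WellFoundedGT.monotone_chain_condition ⟨P.wong, P.wong_mono⟩
  have hstable : P.wong k = P.wong (k + 1) := hk _ k.le_succ
  exact ⟨k, fun x hx => h (hx.exists_isClosedChain (hstable ▸ hx.mem_wong))⟩

/-- The iterated image `(A B⁻¹)ʲ D`. -/
def reach (P : LinPencil R V W) (D : Submodule R W) : ℕ → Submodule R W
  | 0 => D
  | j + 1 => ((P.reach D j).comap P.B).map P.A

theorem exists_seq_of_mem_reach (P : LinPencil R V W) (D : Submodule R W) {j : ℕ} {v : V}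
    (h : P.B v ∈ P.reach D j) :
    ∃ x : ℕ → V, x 0 = v ∧ (∀ i < j, P.A (x (i + 1)) = P.B (x i)) ∧ P.B (x j) ∈ D := by
  induction j generalizing v with
  | zero => exact ⟨fun _ => v, rfl, by simp, h⟩
  | succ j ih =>
    obtain ⟨w, hw, hwv⟩ := h
    obtain ⟨x, hx0, hx, hxD⟩ := ih hw
    refine ⟨fun i => Nat.casesOn i v x, rfl, ?_, hxD⟩
    rintro (_ | i) hi
    · simpa [hx0] using hwv
    · exact hx i (by omega)

/-- A chain of functionals along the transposed pencil. -/
structure IsDualChain (P : LinPencil R V W) (k : ℕ) (ρ : ℕ → Dual R V) (σ : ℕ → Dual R W) :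
    Prop where
  comp_B : ∀ i < k, ∀ v, σ i (P.B v) = ρ i v
  comp_A : ∀ i < k, ∀ v, σ i (P.A v) = ρ (i + 1) v

variable {c : ℕ} {ρ : ℕ → Dual R V} {σ : ℕ → Dual R W}

theorem IsDualChain.apply_succ_succ (hρ : P.IsDualChain k ρ σ) (hx : P.IsChain c x) {i j : ℕ}
    (hi : i < k) (hj : j < c) : ρ (i + 1) (x (j + 1)) = ρ i (x j) := by
  rw [← hρ.comp_A i hi, hx.A_succ j hj, hρ.comp_B i hi]

theorem IsDualChain.apply_eq_zero (hρ : P.IsDualChain k ρ σ) (hx : P.IsChain c x) {i j : ℕ}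
    (hi : i ≤ k) (hj : j ≤ c) (hij : j < i) : ρ i (x j) = 0 := by
  obtain _ | i := i
  · omega
  induction j generalizing i with
  | zero => rw [← hρ.comp_A i hi, hx.A_zero, map_zero]
  | succ j ih =>
    obtain _ | i := i
    · omega
    · rw [hρ.apply_succ_succ hx hi hj]
      exact ih (by omega) i (by omega) (by omega)

theorem IsDualChain.apply_self (hρ : P.IsDualChain k ρ σ) (hx : P.IsChain c x) {j : ℕ}
    (hjk : j ≤ k) (hjc : j ≤ c) : ρ j (x j) = ρ 0 (x 0) := by
  induction j with
  | zero => rfl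
  | succ j ih =>
    rw [hρ.apply_succ_succ hx hjk hjc]
    exact ih (by omega) (by omega)

/-- A closed chain is a morphism from the block `L_k`. -/
def IsClosedChain.hom (h : P.IsClosedChain k x) : Hom (singularBlock R k) P where
  dom := Fintype.linearCombination R fun i : Fin (k + 1) => x i
  cod := Fintype.linearCombination R fun i : Fin k => P.B (x i)
  comm_A a := by
    simp [Fintype.linearCombination_apply, Fin.sum_univ_succ (n := k), h.A_zero, h.A_succ]
  comm_B a := by
    simp [Fintype.linearCombination_apply, Fin.sum_univ_castSucc (n := k), h.B_last]

/-- A chain is a morphism from the block `E_{k+1}(0)`. -/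
def IsChain.hom (h : P.IsChain k x) : Hom (nilpotentBlock R k) P where
  dom := Fintype.linearCombination R fun i : Fin (k + 1) => x i
  cod := Fintype.linearCombination R fun i : Fin (k + 1) => P.B (x i)
  comm_A a := by
    rw [Fintype.linearCombination_apply, Fintype.linearCombination_apply,
      Fin.sum_univ_castSucc (n := k), Fin.sum_univ_succ (n := k)]
    simp [h.A_zero, h.A_succ]
  comm_B a := by simp [Fintype.linearCombination_apply]

/-- A chain of functionals is a morphism to the block `L_k`. -/
def IsDualChain.homSingularBlock (h : P.IsDualChain k ρ σ) : Hom P (singularBlock R k) where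
  dom := LinearMap.pi fun i : Fin (k + 1) => ρ i
  cod := LinearMap.pi fun i : Fin k => σ i
  comm_A v := funext fun i => h.comp_A i i.2 v
  comm_B v := funext fun i => h.comp_B i i.2 v

/-- A chain of functionals that ends with `0` is a morphism to the block `E_{k+1}(0)`. -/
def IsDualChain.homNilpotentBlock (h : P.IsDualChain (k + 1) ρ σ) (h0 : ρ (k + 1) = 0) :
    Hom P (nilpotentBlock R k) where
  dom := LinearMap.pi fun i : Fin (k + 1) => ρ i
  cod := LinearMap.pi fun i : Fin (k + 1) => σ i
  comm_A v := by
    ext i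
    refine Fin.lastCases ?_ (fun i => ?_) i
    · simp [h.comp_A k k.lt_succ_self, h0]
    · simp [h.comp_A i (i.2.trans k.lt_succ_self)]
  comm_B v := funext fun i => h.comp_B i i.2 v

end Chains

end CommRing

/-- The Kronecker canonical blocks over `K`. -/
inductive Block (K : Type*)
  /-- The block `E_{k+1}(p)`; its index is shifted so that its size is positive. -/
  | jordan (p : Option K) (k : ℕ)
  /-- The block `L_k`. -/
  | singular (k : ℕ)
  /-- The block `L_kᵀ`. -/
  | cosingular (k : ℕ)
  deriving DecidableEq

namespace Block

variable {K : Type*}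

/-- The number of columns of a block. -/
def cols : Block K → ℕ
  | jordan _ k => k + 1
  | singular k => k + 1
  | cosingular k => k

/-- The number of rows of a block. -/
def rows : Block K → ℕ
  | jordan _ k => k + 1
  | singular k => k
  | cosingular k => k + 1

/-- The transposed block, up to strict equivalence. -/
def dual : Block K → Block K
  | jordan p k => jordan p k
  | singular k => cosingular k
  | cosingular k => singular k

theorem dual_involutive : Function.Involutive (dual (K := K)) := by
  rintro (_ | _ | _) <;> rfl

theorem rows_add_cols_pos (b : Block K) : 0 < b.rows + b.cols := by
  cases b <;> simp [rows, cols]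

variable [DecidableEq K]

/-- The dimension of the `j`-th term of the Wong sequence of a block at the point `p`. -/
def wongRank (p : Option K) (j : ℕ) : Block K → ℕ
  | jordan q k => if p = q then min j (k + 1) else 0
  | singular k => min j (k + 1)
  | cosingular _ => 0

theorem two_mul_wongRank (p : Option K) (j : ℕ) (b : Block K) :
    2 * b.wongRank p (j + 1) = b.wongRank p j + b.wongRank p (j + 2) +
      ((if b = jordan p j then 1 else 0) + if b = singular j then 1 else 0) := by
  cases b with
  | jordan q k =>
    by_cases hpq : p = q
    · subst hpq
      simp only [wongRank, if_true, jordan.injEq, true_and, reduceCtorEq, if_false]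
      split_ifs <;> omega
    · simp [wongRank, hpq, Ne.symm hpq]
  | singular k =>
    simp only [wongRank, reduceCtorEq, if_false, singular.injEq]
    split_ifs <;> omega
  | cosingular k => simp [wongRank]

theorem two_mul_sum_wongRank (p : Option K) (j : ℕ) (l : List (Block K)) :
    2 * (l.map (wongRank p (j + 1))).sum =
      (l.map (wongRank p j)).sum + (l.map (wongRank p (j + 2))).sum +
        (l.count (.jordan p j) + l.count (.singular j)) := by
  induction l with
  | nil => rfl
  | cons b l ih =>
    have h := b.two_mul_wongRank p j
    simp only [List.map_cons, List.sum_cons, List.count_cons, beq_iff_eq]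
    omega

end Block

section Field

variable {K V W V₁ W₁ : Type*} [Field K]
  [AddCommGroup V] [Module K V] [AddCommGroup W] [Module K W]
  [AddCommGroup V₁] [Module K V₁] [AddCommGroup W₁] [Module K W₁]
  {P : LinPencil K V W} {Q : LinPencil K V₁ W₁}

theorem exists_dual_comp_eq (P : LinPencil K V W) (D : Submodule K W) (s : Dual K W)
    (hs : ∀ w ∈ (D.comap P.B).map P.A, s w = 0) :
    ∃ s' : Dual K W, (∀ w ∈ D, s' w = 0) ∧ ∀ v, s (P.A v) = s' (P.B v) := by
  have hmem : s ∘ₗ P.A ∈ (LinearMap.ker (D.mkQ ∘ₗ P.B)).dualAnnihilator := by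
    rw [Submodule.mem_dualAnnihilator]
    intro v hv
    exact hs _ ⟨v, by simpa using hv, rfl⟩
  rw [← LinearMap.range_dualMap_eq_dualAnnihilator_ker] at hmem
  obtain ⟨t, ht⟩ := hmem
  refine ⟨t ∘ₗ D.mkQ, fun w hw => ?_, fun v => (LinearMap.congr_fun ht v).symm⟩
  simp [(Submodule.Quotient.mk_eq_zero D).2 hw]

theorem exists_dual_seq (P : LinPencil K V W) (D : Submodule K W) {j : ℕ} {w : W}
    (hw : w ∉ P.reach D j) :
    ∃ σ : ℕ → Dual K W, σ 0 w ≠ 0 ∧ (∀ i < j, ∀ v, σ i (P.A v) = σ (i + 1) (P.B v)) ∧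
      ∀ d ∈ D, σ j d = 0 := by
  obtain ⟨s, hsw, hs⟩ := Submodule.exists_dual_map_eq_bot_of_notMem hw inferInstance
  replace hs : ∀ u ∈ P.reach D j, s u = 0 := fun u hu => LinearMap.le_ker_iff_map.2 hs hu
  suffices ∃ σ : ℕ → Dual K W, σ 0 = s ∧ (∀ i < j, ∀ v, σ i (P.A v) = σ (i + 1) (P.B v)) ∧
      ∀ d ∈ D, σ j d = 0 by
    obtain ⟨σ, rfl, hσ⟩ := this
    exact ⟨σ, hsw, hσ⟩
  clear hsw hw
  induction j generalizing s with
  | zero => exact ⟨fun _ => s, rfl, by simp, hs⟩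
  | succ j ih =>
    obtain ⟨t, ht, hst⟩ := P.exists_dual_comp_eq _ s hs
    obtain ⟨σ, hσ0, hσ, hσD⟩ := ih t ht
    refine ⟨fun i => Nat.casesOn i s σ, rfl, ?_, hσD⟩
    rintro (_ | i) hi
    · simpa [hσ0] using hst
    · exact hσ i (by omega)

theorem bijective_pi_comp_linearCombination {n : ℕ} {x : Fin n → V} {ρ : Fin n → Dual K V}
    (h₀ : ∀ i j, j < i → ρ i (x j) = 0) (h₁ : ∀ i, ρ i (x i) ≠ 0) :
    Function.Bijective (LinearMap.pi ρ ∘ₗ Fintype.linearCombination K x) := by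
  let T : Matrix (Fin n) (Fin n) K := .of fun i j => ρ i (x j)
  have hT : LinearMap.pi ρ ∘ₗ Fintype.linearCombination K x = T.mulVecLin := by
    refine LinearMap.ext fun a => funext fun i => ?_
    simp [T, Fintype.linearCombination_apply, Matrix.mulVec, dotProduct, mul_comm]
  have hupper : T.IsUpperTriangular := fun i j hij => h₀ i j hij
  have hunit : IsUnit T := by
    rw [Matrix.isUnit_iff_isUnit_det, Matrix.det_of_isUpperTriangular hupper, isUnit_iff_ne_zero]
    exact Finset.prod_ne_zero_iff.2 fun i _ => h₁ i
  rw [hT]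
  exact ⟨Matrix.mulVec_injective_iff_isUnit.2 hunit, Matrix.mulVec_surjective_iff_isUnit.2 hunit⟩

section Splitting

variable {c k n : ℕ} {x : ℕ → V} {ρ : ℕ → Dual K V} {σ : ℕ → Dual K W}

theorem IsDualChain.bijective_dom (hρ : P.IsDualChain k ρ σ) (hx : P.IsChain c x)
    (h0 : ρ 0 (x 0) ≠ 0) (hk : n ≤ k + 1) (hc : n ≤ c + 1) :
    Function.Bijective (LinearMap.pi (fun i : Fin n => ρ i) ∘ₗ
      Fintype.linearCombination K fun i : Fin n => x i) :=
  bijective_pi_comp_linearCombination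
    (fun i j hij => hρ.apply_eq_zero hx (by omega) (by omega) hij)
    fun i => (hρ.apply_self hx (by omega) (by omega)).trans_ne h0

theorem IsDualChain.bijective_cod (hρ : P.IsDualChain k ρ σ) (hx : P.IsChain c x)
    (h0 : ρ 0 (x 0) ≠ 0) (hk : n ≤ k) (hc : n ≤ c + 1) :
    Function.Bijective (LinearMap.pi (fun i : Fin n => σ i) ∘ₗ
      Fintype.linearCombination K fun i : Fin n => P.B (x i)) := by
  refine bijective_pi_comp_linearCombination (fun i j hij => ?_) fun i => ?_
  · rw [hρ.comp_B i (by omega)]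
    exact hρ.apply_eq_zero hx (by omega) (by omega) hij
  · rw [hρ.comp_B i (by omega), hρ.apply_self hx (by omega) (by omega)]
    exact h0

theorem IsClosedChain.isRetract_singularBlock (hx : P.IsClosedChain k x)
    (hρ : P.IsDualChain k ρ σ) (h0 : ρ 0 (x 0) ≠ 0) : IsRetract (singularBlock K k) P :=
  ⟨hx.hom, hρ.homSingularBlock, hρ.bijective_dom hx.toIsChain h0 le_rfl le_rfl,
    hρ.bijective_cod hx.toIsChain h0 le_rfl k.le_succ⟩

theorem IsChain.isRetract_nilpotentBlock (hx : P.IsChain k x)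
    (hρ : P.IsDualChain (k + 1) ρ σ) (h0 : ρ 0 (x 0) ≠ 0) (hlast : ρ (k + 1) = 0) :
    IsRetract (nilpotentBlock K k) P :=
  ⟨hx.hom, hρ.homNilpotentBlock hlast, hρ.bijective_dom hx h0 (k + 1).le_succ le_rfl,
    hρ.bijective_cod hx h0 le_rfl le_rfl⟩

-- For a shortest closed chain `x`, no sequence from `x 0` closes earlier, which provides a
-- functional that is nonzero on `B (x 0)` and starts a dual chain.
theorem exists_isRetract_singularBlock (P : LinPencil K V W) (h : ∃ k x, P.IsClosedChain k x) :
    ∃ k, IsRetract (singularBlock K k) P := by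
  classical
  obtain ⟨x, hx⟩ := Nat.find_spec h
  have hmin := fun l => Nat.find_min h (m := l)
  generalize Nat.find h = k at hx hmin
  refine ⟨k, ?_⟩
  obtain _ | k := k
  · obtain ⟨f, hf⟩ := Projective.exists_dual_ne_zero K hx.ne_zero
    exact hx.isRetract_singularBlock (ρ := fun _ => f) (σ := 0) ⟨by simp, by simp⟩ hf
  · have hreach : P.B (x 0) ∉ P.reach ⊥ k := fun hmem => by
      obtain ⟨y, hy0, hy, hyk⟩ := P.exists_seq_of_mem_reach _ hmem
      exact hmin k k.lt_succ_self ⟨y, ⟨hy0 ▸ hx.ne_zero, hy0 ▸ hx.A_zero, hy⟩, by simpa using hyk⟩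
    obtain ⟨σ, hσ0, hσ, -⟩ := P.exists_dual_seq _ hreach
    let ρ (i : ℕ) : Dual K V := Nat.casesOn i (σ 0 ∘ₗ P.B) fun j => σ j ∘ₗ P.A
    refine hx.isRetract_singularBlock (ρ := ρ) (σ := σ) ⟨?_, fun _ _ _ => rfl⟩ hσ0
    rintro (_ | i) hi v
    · rfl
    · exact (hσ i (by omega) v).symm

-- For a longest chain `x`, no longer chain starts at `x 0`, which provides a functional that is
-- nonzero on `B (x 0)` and starts a dual chain ending with `0`.
theorem exists_isRetract_nilpotentBlock [FiniteDimensional K V] (P : LinPencil K V W)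
    (hker : ¬ Function.Injective P.A) (h : ¬ ∃ k x, P.IsClosedChain k x) :
    ∃ k, IsRetract (nilpotentBlock K k) P := by
  classical
  have hbound := P.exists_forall_not_isChain h
  have hk := Nat.find_spec hbound
  have hmin := fun l => Nat.find_min hbound (m := l)
  generalize Nat.find hbound = k at hk hmin
  obtain _ | k := k
  · rw [injective_iff_map_eq_zero] at hker
    push Not at hker
    obtain ⟨v, hv, hv0⟩ := hker
    exact absurd ⟨hv0, hv, by simp⟩ (hk fun _ => v)
  · obtain ⟨x, hx⟩ := not_forall_not.1 (hmin k k.lt_succ_self)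
    have hreach : P.B (x 0) ∉ P.reach ⊤ (k + 1) := fun hmem => by
      obtain ⟨y, hy0, hy, -⟩ := P.exists_seq_of_mem_reach _ hmem
      exact hk y ⟨hy0 ▸ hx.ne_zero, hy0 ▸ hx.A_zero, hy⟩
    obtain ⟨σ, hσ0, hσ, hσk⟩ := P.exists_dual_seq _ hreach
    exact ⟨k, hx.isRetract_nilpotentBlock (ρ := fun i => σ i ∘ₗ P.B) ⟨fun _ _ _ => rfl, hσ⟩ hσ0
      (LinearMap.ext fun v => hσk _ Submodule.mem_top)⟩

end Splitting

/-- The pencil of a block. -/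
def Block.pencil : (b : Block K) → LinPencil K (Fin b.cols → K) (Fin b.rows → K)
  | jordan p k => jordanBlock p k
  | singular k => singularBlock K k
  | cosingular k => cosingularBlock K k

theorem Block.pencil_dual (b : Block K) : Iso b.dual.pencil b.pencil.dual :=
  match b with
  | jordan p k => jordanBlock_iso_dual p k
  | singular k => cosingularBlock_iso_dual k
  | cosingular k => (iso_dual_dual _).trans (cosingularBlock_iso_dual k).dual.symm

/-- The direct sum of a list of blocks. -/
def directSum (l : List (Block K)) :
    LinPencil K (∀ i : Fin l.length, Fin (l.get i).cols → K)
      (∀ i : Fin l.length, Fin (l.get i).rows → K) :=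
  ⟨LinearMap.piMap fun i => (l.get i).pencil.A, LinearMap.piMap fun i => (l.get i).pencil.B⟩

/-- `P` is strictly equivalent to the direct sum of the blocks in `s`. -/
def IsKroneckerForm (P : LinPencil K V W) (s : Multiset (Block K)) : Prop :=
  ∃ l : List (Block K), l = s ∧ Iso P (directSum l)

theorem iso_directSum_nil [Subsingleton V] [Subsingleton W] (P : LinPencil K V W) :
    Iso P (directSum []) :=
  have : IsEmpty (Fin ([] : List (Block K)).length) := Fin.isEmpty
  .of_subsingleton _ _

theorem directSum_cons (b : Block K) (l : List (Block K)) :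
    Iso (b.pencil.prod (directSum l)) (directSum (b :: l)) := by
  refine ⟨Fin.consLinearEquiv K fun i : Fin (l.length + 1) => Fin ((b :: l).get i).cols → K,
    Fin.consLinearEquiv K fun i : Fin (l.length + 1) => Fin ((b :: l).get i).rows → K,
    fun x => funext fun i => ?_, fun x => funext fun i => ?_⟩ <;>
  exact Fin.cases rfl (fun _ => rfl) i

theorem directSum_map_dual (l : List (Block K)) :
    Iso (directSum (l.map Block.dual)) (directSum l).dual := by
  induction l with
  | nil =>
    have : IsEmpty (Fin ([] : List (Block K)).length) := Fin.isEmpty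
    exact (iso_directSum_nil _).symm
  | cons b l ih =>
    exact (directSum_cons _ _).symm.trans <| (b.pencil_dual.prod ih).trans <|
      (dual_prod _ _).trans (directSum_cons b l).dual

section Existence

variable [FiniteDimensional K V]

theorem exists_isRetract_of_not_injective (P : LinPencil K V W) {p : Option K}
    (hp : ¬ Function.Injective (reparam p P).A) : ∃ b : Block K, IsRetract b.pencil P := by
  by_cases h : ∃ k x, (reparam p P).IsClosedChain k x
  · obtain ⟨k, hk⟩ := exists_isRetract_singularBlock _ h
    rw [← reparam_neg_reparam p P]
    exact ⟨.singular k, (hk.reparam _).congr (iso_reparam_singularBlock _ k) (.refl _)⟩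
  · obtain ⟨k, hk⟩ := exists_isRetract_nilpotentBlock _ hp h
    rw [← reparam_neg_reparam p P]
    exact ⟨.jordan p k, hk.reparam _⟩

theorem exists_not_injective_reparam [IsAlgClosed K] [Nontrivial (V × W)]
    (P : LinPencil K V W) :
    ∃ p : Option K, ¬ Function.Injective (reparam p P).A ∨
      ¬ Function.Injective (reparam p P.dual).A := by
  by_cases hinj : Function.Injective P.B
  swap
  · exact ⟨none, .inl hinj⟩
  by_cases hsurj : Function.Surjective P.B
  swap
  · exact ⟨none, .inr fun h => hsurj (LinearMap.dualMap_injective_iff.1 h)⟩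
  let e := LinearEquiv.ofBijective P.B ⟨hinj, hsurj⟩
  have : Nontrivial V := not_subsingleton_iff_nontrivial.1 fun _ => by
    have := e.symm.injective.subsingleton
    exact not_subsingleton (V × W) inferInstance
  obtain ⟨μ, hμ⟩ := Module.End.exists_eigenvalue (e.symm.toLinearMap ∘ₗ P.A)
  obtain ⟨v, hv⟩ := hμ.exists_hasEigenvector
  have hAv : P.A v = μ • P.B v := by
    have : P.A v = e (μ • v) := e.symm_apply_eq.1 hv.apply_eq_smul
    rwa [map_smul] at this
  exact ⟨some μ, .inl fun h => hv.2 (h (by simp [reparam, hAv]))⟩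

variable [FiniteDimensional K W]

theorem exists_isRetract_block [IsAlgClosed K] [Nontrivial (V × W)] (P : LinPencil K V W) :
    ∃ b : Block K, IsRetract b.pencil P := by
  obtain ⟨p, hp | hp⟩ := P.exists_not_injective_reparam
  · exact P.exists_isRetract_of_not_injective hp
  · obtain ⟨b, hb⟩ := P.dual.exists_isRetract_of_not_injective hp
    exact ⟨b.dual, hb.dual.congr b.pencil_dual.symm (iso_dual_dual P).symm⟩

theorem exists_iso_directSum [IsAlgClosed K] (P : LinPencil K V W) :
    ∃ l : List (Block K), Iso P (directSum l) := by
  induction hd : finrank K (V × W) using Nat.strong_induction_on generalizing V W with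
  | _ d ih =>
    subst hd
    cases subsingleton_or_nontrivial (V × W)
    · have : Subsingleton V := (Prod.mk_left_injective (0 : W)).subsingleton
      have : Subsingleton W := (Prod.mk_right_injective (0 : V)).subsingleton
      exact ⟨[], iso_directSum_nil P⟩
    · obtain ⟨b, hb⟩ := P.exists_isRetract_block
      obtain ⟨V', W', P', hP⟩ := hb.exists_iso_prod
      have hlt : finrank K (V' × W') < finrank K (V × W) := by
        obtain ⟨e, f, -⟩ := hP
        have hb := b.rows_add_cols_pos
        simp only [finrank_prod, e.finrank_eq, f.finrank_eq, finrank_fin_fun]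
        omega
      obtain ⟨l, hl⟩ := ih _ hlt P' rfl
      exact ⟨b :: l, hP.trans <| ((Iso.refl _).prod hl).trans (directSum_cons b l)⟩

end Existence

section Uniqueness

theorem finrank_wong_prod [FiniteDimensional K V] [FiniteDimensional K V₁]
    (P : LinPencil K V W) (Q : LinPencil K V₁ W₁) (j : ℕ) :
    finrank K ((P.prod Q).wong j) = finrank K (P.wong j) + finrank K (Q.wong j) := by
  have h := LinearMap.finrank_range_of_inj (f := (P.wong j).subtype.prodMap (Q.wong j).subtype)
    ((P.wong j).injective_subtype.prodMap (Q.wong j).injective_subtype)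
  rwa [LinearMap.range_prodMap, Submodule.range_subtype, Submodule.range_subtype, finrank_prod,
    ← wong_prod] at h

theorem eq_zero_of_smul_nilpotentBlock_add_smul {a b : K} (hb : b ≠ 0) {k : ℕ}
    {x : Fin (k + 1) → K} (hx : a • (nilpotentBlock K k).A x + b • x = 0) : x = 0 := by
  funext i
  have hxi := congrFun hx i
  induction i using Fin.reverseInduction with
  | last => simpa [hb] using hxi
  | cast i ih => simpa [hb, ih (congrFun hx _)] using hxi

theorem injective_reparam_jordanBlock {p q : Option K} (hpq : p ≠ q) (k : ℕ) :
    Function.Injective (reparam p (jordanBlock q k)).A := by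
  refine (injective_iff_map_eq_zero _).2 fun x hx => ?_
  match p, q with
  | none, none => exact absurd rfl hpq
  | none, some _ => exact hx
  | some μ, none =>
    refine eq_zero_of_smul_nilpotentBlock_add_smul (a := -μ) one_ne_zero ?_
    rw [neg_smul, one_smul, neg_add_eq_sub]
    exact hx
  | some μ, some ν =>
    have hνμ : ν - μ ≠ 0 := sub_ne_zero.2 fun h => hpq (congrArg some h.symm)
    refine eq_zero_of_smul_nilpotentBlock_add_smul (a := 1) hνμ ?_
    rw [one_smul, sub_smul, ← add_sub_assoc, ← sub_neg_eq_add, ← neg_smul]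
    exact hx

variable [DecidableEq K]

theorem Block.finrank_wong (p : Option K) (j : ℕ) (b : Block K) :
    finrank K ((reparam p b.pencil).wong j) = b.wongRank p j := by
  match b with
  | jordan q k =>
    rw [wongRank]
    split_ifs with hpq
    · subst hpq
      refine (iso_reparam_jordanBlock p k).finrank_wong j |>.trans ?_
      rw [wong_nilpotentBlock, finrank_firstCoords]
    · change finrank K ((reparam p (jordanBlock q k)).wong j) = 0
      rw [wong_eq_bot (injective_reparam_jordanBlock hpq k), finrank_bot]
  | singular k =>
    refine (iso_reparam_singularBlock p k).finrank_wong j |>.trans ?_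
    rw [wong_singularBlock, finrank_firstCoords, wongRank]
  | cosingular k =>
    refine (iso_reparam_cosingularBlock p k).finrank_wong j |>.trans ?_
    rw [wong_eq_bot (Function.extend_injective (Fin.succ_injective k) 0), finrank_bot, wongRank]

theorem finrank_wong_directSum (p : Option K) (j : ℕ) (l : List (Block K)) :
    finrank K ((reparam p (directSum l)).wong j) = (l.map (Block.wongRank p j)).sum := by
  induction l with
  | nil =>
    have : IsEmpty (Fin ([] : List (Block K)).length) := Fin.isEmpty
    exact finrank_zero_of_subsingleton
  | cons b l ih =>
    rw [← ((directSum_cons b l).reparam p).finrank_wong, reparam_prod, finrank_wong_prod,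
      b.finrank_wong, ih, List.map_cons, List.sum_cons]

variable {l₁ l₂ : List (Block K)}

theorem count_jordan_add_count_singular_eq (h : Iso (directSum l₁) (directSum l₂)) (p : Option K)
    (j : ℕ) :
    l₁.count (.jordan p j) + l₁.count (.singular j) =
      l₂.count (.jordan p j) + l₂.count (.singular j) := by
  have hsum (i : ℕ) : (l₁.map (Block.wongRank p i)).sum = (l₂.map (Block.wongRank p i)).sum := by
    rw [← finrank_wong_directSum, ← finrank_wong_directSum, (h.reparam p).finrank_wong]
  have h₁ := Block.two_mul_sum_wongRank p j l₁
  have h₂ := Block.two_mul_sum_wongRank p j l₂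
  rw [hsum, hsum, hsum] at h₁
  omega

variable [Infinite K]

theorem count_singular_eq (h : Iso (directSum l₁) (directSum l₂)) (j : ℕ) :
    l₁.count (.singular j) = l₂.count (.singular j) := by
  have hinj : Function.Injective fun p : Option K => Block.jordan p j := fun p q hpq => by
    simpa using hpq
  obtain ⟨_, ⟨p, rfl⟩, hp⟩ :=
    (Set.infinite_range_of_injective hinj).exists_notMem_finset (l₁ ++ l₂).toFinset
  simp only [List.mem_toFinset, List.mem_append, not_or] at hp
  have hcount := count_jordan_add_count_singular_eq h p j
  simpa only [List.count_eq_zero_of_not_mem hp.1, List.count_eq_zero_of_not_mem hp.2,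
    zero_add] using hcount

theorem count_cosingular_eq (h : Iso (directSum l₁) (directSum l₂)) (j : ℕ) :
    l₁.count (.cosingular j) = l₂.count (.cosingular j) := by
  have hdual : Iso (directSum (l₁.map Block.dual)) (directSum (l₂.map Block.dual)) :=
    (directSum_map_dual l₁).trans <| h.dual.trans (directSum_map_dual l₂).symm
  have hcount (l : List (Block K)) : (l.map Block.dual).count (.singular j) =
      l.count (.cosingular j) :=
    List.count_map_of_injective l Block.dual Block.dual_involutive.injective (.cosingular j)
  rw [← hcount, ← hcount, count_singular_eq hdual]

omit [DecidableEq K] in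
theorem perm_of_iso_directSum (h : Iso (directSum l₁) (directSum l₂)) : l₁.Perm l₂ := by
  classical
  refine List.perm_iff_count.2 fun b => ?_
  cases b with
  | jordan p j =>
    have hcount := count_jordan_add_count_singular_eq h p j
    rwa [count_singular_eq h, Nat.add_right_cancel_iff] at hcount
  | singular j => exact count_singular_eq h j
  | cosingular j => exact count_cosingular_eq h j

end Uniqueness

end Field

end LinPencil

theorem kronecker_canonical_form_general {K V W : Type*} [Field K] [IsAlgClosed K]
    [AddCommGroup V] [Module K V] [FiniteDimensional K V]
    [AddCommGroup W] [Module K W] [FiniteDimensional K W] (P : LinPencil K V W) :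
    ∃! s : Multiset (LinPencil.Block K), P.IsKroneckerForm s := by
  obtain ⟨l, hl⟩ := P.exists_iso_directSum
  refine ⟨l, ⟨l, rfl, hl⟩, ?_⟩
  rintro _ ⟨l', rfl, hl'⟩
  exact Multiset.coe_eq_coe.2 (LinPencil.perm_of_iso_directSum (hl'.symm.trans hl))

open LinPencil

theorem Fmat_mulVec (k : ℕ) (x : Fin (k + 1) → ℂ) : Fmat k *ᵥ x = (singularBlock ℂ k).A x := by
  ext i
  have hrow : Fmat k i = Pi.single i.succ 1 := by
    ext j
    simp [Fmat, Pi.single_apply, Fin.ext_iff]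
  simp [Matrix.mulVec, hrow]

theorem Gmat_mulVec (k : ℕ) (x : Fin (k + 1) → ℂ) : Gmat k *ᵥ x = (singularBlock ℂ k).B x := by
  ext i
  have hrow : Gmat k i = Pi.single i.castSucc 1 := by
    ext j
    simp [Gmat, Pi.single_apply, Fin.ext_iff]
  simp [Matrix.mulVec, hrow]

theorem Fmat_transpose_mulVec (k : ℕ) (x : Fin k → ℂ) :
    (Fmat k)ᵀ *ᵥ x = (cosingularBlock ℂ k).A x := by
  refine dotProduct_eq _ _ fun y => ?_
  rw [Matrix.mulVec_transpose, ← Matrix.dotProduct_mulVec, Fmat_mulVec]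
  exact (extend_zero_dotProduct (Fin.succ_injective k) x y).symm

theorem Gmat_transpose_mulVec (k : ℕ) (x : Fin k → ℂ) :
    (Gmat k)ᵀ *ᵥ x = (cosingularBlock ℂ k).B x := by
  refine dotProduct_eq _ _ fun y => ?_
  rw [Matrix.mulVec_transpose, ← Matrix.dotProduct_mulVec, Gmat_mulVec]
  exact (extend_zero_dotProduct (Fin.castSucc_injective k) x y).symm

theorem Jmat_mulVec (k : ℕ) (μ : ℂ) (x : Fin (k + 1) → ℂ) :
    Jmat (k + 1) μ *ᵥ x = (jordanBlock (some μ) k).A x := by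
  suffices Jmat (k + 1) μ *ᵥ x = (nilpotentBlock ℂ k).A x - -μ • x from this
  ext i
  induction i using Fin.lastCases with
  | last =>
    have hrow : Jmat (k + 1) μ (Fin.last k) = Pi.single (Fin.last k) μ := by
      ext j
      have : (j : ℕ) ≠ k + 1 := by omega
      simp [Jmat, Pi.single_apply, Fin.ext_iff, this]
    simp [Matrix.mulVec, hrow]
  | cast i =>
    have hrow : Jmat (k + 1) μ i.castSucc = Pi.single i.succ 1 + Pi.single i.castSucc μ := by
      ext j
      simp only [Jmat, Matrix.of_apply, Pi.add_apply, Pi.single_apply, Fin.ext_iff,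
        Fin.val_castSucc, Fin.val_succ]
      split_ifs <;> first | omega | simp
    rw [Matrix.mulVec, hrow, add_dotProduct]
    simp

theorem Jmat_zero_mulVec (k : ℕ) (x : Fin (k + 1) → ℂ) :
    Jmat (k + 1) 0 *ᵥ x = (jordanBlock (R := ℂ) none k).B x := by
  refine (Jmat_mulVec k 0 x).trans ?_
  change (nilpotentBlock ℂ k).A x - -(0 : ℂ) • x = (nilpotentBlock ℂ k).A x
  rw [neg_zero, zero_smul, sub_zero]

namespace Pencil

variable {m n : ℕ}

/-- The pencil of linear maps given by a matrix pencil. -/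
def toLinPencil (P : Pencil m n) : LinPencil ℂ (Fin n → ℂ) (Fin m → ℂ) :=
  ⟨P.1.mulVecLin, P.2.mulVecLin⟩

theorem inv_mul_mul_eq_iff {S : Matrix (Fin m) (Fin m) ℂ} (hS : IsUnit S)
    {R : Matrix (Fin n) (Fin n) ℂ} {M N : Matrix (Fin m) (Fin n) ℂ} :
    S⁻¹ * M * R = N ↔ ∀ x, S *ᵥ (N *ᵥ x) = M *ᵥ (R *ᵥ x) := by
  have := hS.invertible
  rw [Matrix.mul_assoc, Matrix.inv_mul_eq_iff_eq_mul_of_invertible, eq_comm,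
    ← Matrix.mulVec_injective.eq_iff, funext_iff]
  simp only [Matrix.mulVec_mulVec]

theorem strictEquiv_iff_iso {P Q : Pencil m n} :
    StrictEquiv P Q ↔ Iso P.toLinPencil Q.toLinPencil := by
  constructor
  · rintro ⟨S, R, hS, hR, hA, hB⟩
    exact Iso.symm ⟨R.toLinearEquiv' hR.invertible, S.toLinearEquiv' hS.invertible,
      (inv_mul_mul_eq_iff hS).1 hA, (inv_mul_mul_eq_iff hS).1 hB⟩
  · intro h
    obtain ⟨e, f, hA, hB⟩ := h.symm
    have hunit {k : ℕ} (g : (Fin k → ℂ) ≃ₗ[ℂ] (Fin k → ℂ)) :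
        IsUnit (LinearMap.toMatrix' g.toLinearMap) := by
      rw [Matrix.isUnit_iff_isUnit_det, LinearMap.det_toMatrix']
      exact g.isUnit_det'
    refine ⟨_, _, hunit f, hunit e, (inv_mul_mul_eq_iff (hunit f)).2 fun x => ?_,
      (inv_mul_mul_eq_iff (hunit f)).2 fun x => ?_⟩
    · rw [LinearMap.toMatrix'_mulVec, LinearMap.toMatrix'_mulVec]
      exact hA x
    · rw [LinearMap.toMatrix'_mulVec, LinearMap.toMatrix'_mulVec]
      exact hB x

theorem dsum_iso_prod {p q : ℕ} (P : Pencil m n) (Q : Pencil p q) :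
    Iso (dsum P Q).toLinPencil (P.toLinPencil.prod Q.toLinPencil) := by
  let e (m p : ℕ) : (Fin (m + p) → ℂ) ≃ₗ[ℂ] (Fin m → ℂ) × (Fin p → ℂ) :=
    LinearEquiv.funCongrLeft ℂ ℂ finSumFinEquiv ≪≫ₗ
      LinearEquiv.sumArrowLequivProdArrow (Fin m) (Fin p) ℂ ℂ
  have hblock (M : Matrix (Fin m) (Fin n) ℂ) (N : Matrix (Fin p) (Fin q) ℂ)
      (x : Fin (n + q) → ℂ) :
      e m p ((fromBlocks M 0 0 N).submatrix finSumFinEquiv.symm finSumFinEquiv.symm *ᵥ x) =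
        M.mulVecLin.prodMap N.mulVecLin (e n q x) := by
    rw [Matrix.submatrix_mulVec_equiv]
    ext i <;> simp [e, LinearMap.funLeft_apply, Matrix.mulVec, dotProduct]
  exact ⟨e n q, e m p, hblock _ _, hblock _ _⟩

theorem cast_iso {m' n' : ℕ} (hm : m = m') (hn : n = n') (P : Pencil m n) :
    Iso (cast hm hn P).toLinPencil P.toLinPencil := by
  subst hm hn
  exact .refl _

end Pencil

namespace LinPencil.Block

/-- The descriptor of a block. -/
def toKBlock : Block ℂ → KBlock
  | jordan p k => Eb p (k + 1)
  | singular k => .L k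
  | cosingular k => .LT k

theorem valid_iff_mem_range_toKBlock (b : KBlock) : b.valid ↔ b ∈ Set.range toKBlock := by
  constructor
  · intro hb
    match b with
    | .E (k + 1) μ => exact ⟨jordan (some μ) k, rfl⟩
    | .Einf (k + 1) => exact ⟨jordan none k, rfl⟩
    | .L k => exact ⟨singular k, rfl⟩
    | .LT k => exact ⟨cosingular k, rfl⟩
  · rintro ⟨⟨_ | μ, k⟩ | k | k, rfl⟩ <;> simp [toKBlock, Eb, KBlock.valid]

theorem toPencil_iso (b : Block ℂ) : Iso b.toKBlock.toPencil.toLinPencil b.pencil := by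
  match b with
  | jordan none k => exact ⟨.refl _ _, .refl _ _, Matrix.one_mulVec, Jmat_zero_mulVec k⟩
  | jordan (some μ) k => exact ⟨.refl _ _, .refl _ _, Jmat_mulVec k μ, Matrix.one_mulVec⟩
  | singular k => exact ⟨.refl _ _, .refl _ _, Fmat_mulVec k, Gmat_mulVec k⟩
  | cosingular k =>
    exact ⟨.refl _ _, .refl _ _, Fmat_transpose_mulVec k, Gmat_transpose_mulVec k⟩

theorem pencilOfList_iso_directSum (l : List (Block ℂ)) :
    Iso (pencilOfList (l.map toKBlock)).toLinPencil (directSum l) := by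
  induction l with
  | nil =>
    have : IsEmpty (Fin (colsSum [])) := Fin.isEmpty
    have : IsEmpty (Fin (rowsSum [])) := Fin.isEmpty
    exact iso_directSum_nil (V := Fin (colsSum []) → ℂ) (W := Fin (rowsSum []) → ℂ) _
  | cons b l ih =>
    exact (Pencil.dsum_iso_prod _ _).trans ((b.toPencil_iso.prod ih).trans (directSum_cons b l))

end LinPencil.Block

theorem representsE_iff {m n : ℕ} {P : Pencil m n} {s : Multiset KBlock} :
    RepresentsE P s ↔
      ∃ t : Multiset (Block ℂ), t.map Block.toKBlock = s ∧ P.toLinPencil.IsKroneckerForm t := by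
  constructor
  · rintro ⟨hs, l, hm, hn, rfl, h⟩
    obtain ⟨l, rfl⟩ : l ∈ Set.range (List.map Block.toKBlock) := by
      rw [Set.range_list_map]
      exact fun b hb => (Block.valid_iff_mem_range_toKBlock b).1 (hs b hb)
    exact ⟨l, rfl, l, rfl, (Pencil.strictEquiv_iff_iso.1 h).symm.trans <|
      (Pencil.cast_iso hm hn _).trans (Block.pencilOfList_iso_directSum l)⟩
  · rintro ⟨_, rfl, l, rfl, h⟩
    replace h := (Block.pencilOfList_iso_directSum l).trans h.symm
    obtain ⟨e, f, -⟩ := id h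
    have hm : rowsSum (l.map Block.toKBlock) = m := by simpa using f.finrank_eq
    have hn : colsSum (l.map Block.toKBlock) = n := by simpa using e.finrank_eq
    refine ⟨fun b hb => ?_, _, hm, hn, rfl,
      Pencil.strictEquiv_iff_iso.2 ((Pencil.cast_iso hm hn _).trans h)⟩
    obtain ⟨b, -, rfl⟩ := Multiset.mem_map.1 hb
    exact (Block.valid_iff_mem_range_toKBlock _).2 ⟨b, rfl⟩

/-- **Kronecker canonical form** (Theorem 2.1): every `m × n` complex matrix
pencil is strictly equivalent to a direct sum of blocks `E_k(μ)` (`μ ∈ ℂ`),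
`E_k(∞)`, `L_k`, `L_kᵀ`, and this direct sum is uniquely determined up to
permutation of the summands (i.e. the multiset of blocks is unique). -/
theorem kronecker_canonical_form {m n : ℕ} (P : Pencil m n) :
    (∃ s : Multiset KBlock, RepresentsE P s) ∧
      ∀ s₁ s₂ : Multiset KBlock, RepresentsE P s₁ → RepresentsE P s₂ → s₁ = s₂ := by
  obtain ⟨t, ht, hunique⟩ := kronecker_canonical_form_general P.toLinPencil
  refine ⟨⟨t.map Block.toKBlock, representsE_iff.2 ⟨t, rfl, ht⟩⟩, fun s₁ s₂ hs₁ hs₂ => ?_⟩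
  obtain ⟨t₁, rfl, ht₁⟩ := representsE_iff.1 hs₁
  obtain ⟨t₂, rfl, ht₂⟩ := representsE_iff.1 hs₂
  rw [hunique t₁ ht₁, hunique t₂ ht₂]
end
end

section
/- Thompson canonical form: every skew-symmetric n×n complex matrix pencil A − λB is congruent to a direct sum of blocks of the forms H_h(μ) with μ ∈ ℂ, K_k, and M_m, and this direct sum is uniquely determined up to permutation of the summands. -/
/-!
Basic framework: a complex `m × n` matrix pencil `A - λ B` is formalized as the
pair `(A, B)` of matrices.  We define strict equivalence, congruence,
skew-symmetry, orbits, direct sums, and the cover relations for the orbit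
closure hierarchies (in the Euclidean topology).
-/

open Matrix

noncomputable section

/-! Skew-symmetric (Thompson) canonical forms as multisets of block
descriptors. -/

/-- Descriptor of a skew-symmetric canonical block. -/
inductive SBlock : Type
  | H : ℕ → ℂ → SBlock    -- `H_h(μ)`, `μ ∈ ℂ`
  | K : ℕ → SBlock         -- `K_k = H_k(∞)`
  | M : ℕ → SBlock         -- `M_m`

namespace SBlock

/-- Size of a block. -/
def size : SBlock → ℕ
  | H h _ => h + h
  | K k => k + k
  | M m => m + (m + 1)

/-- A block is valid (may occur in a canonical form) if the `H`- and `K`-blocks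
have index at least one. -/
def valid : SBlock → Prop
  | H h _ => 1 ≤ h
  | K k => 1 ≤ k
  | M _ => True

/-- The pencil corresponding to a block descriptor. -/
def toPencil : (b : SBlock) → Pencil b.size b.size
  | H h μ => Hblk h μ
  | K k => Kblk k
  | M m => Mblk m

end SBlock

/-- The block `H_h(μ)` for an eigenvalue `μ ∈ ℂ ∪ {∞}`; `none` encodes `∞`
(so `Hb none h` is the block `K_h`). -/
def Hb : Option ℂ → ℕ → SBlock
  | some μ, h => SBlock.H h μ
  | none, h => SBlock.K h

/-- Total size of a list of blocks. -/
def sizeSum : List SBlock → ℕ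
  | [] => 0
  | b :: t => b.size + sizeSum t

/-- The direct sum of the blocks in a list. -/
def spencilOfList : (l : List SBlock) → Pencil (sizeSum l) (sizeSum l)
  | [] => (0, 0)
  | b :: t => Pencil.dsum b.toPencil (spencilOfList t)

/-- `s` is the multiset of blocks of the skew-symmetric canonical form of `P`,
i.e. `P` is congruent to the direct sum of the blocks of `s`. -/
def RepresentsC {n : ℕ} (P : Pencil n n) (s : Multiset SBlock) : Prop :=
  (∀ b ∈ s, b.valid) ∧
  ∃ (l : List SBlock) (h : sizeSum l = n),
    (l : Multiset SBlock) = s ∧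
    Pencil.Congruent (Pencil.cast h h (spencilOfList l)) P

/-- Like `RepresentsC`, but also allowing degenerate (empty) blocks such as
`H_0(μ)` among the summands. -/
def WeakRepresentsC {n : ℕ} (P : Pencil n n) (s : Multiset SBlock) : Prop :=
  ∃ (l : List SBlock) (h : sizeSum l = n),
    (l : Multiset SBlock) = s ∧
    Pencil.Congruent (Pencil.cast h h (spencilOfList l)) P

/-!
View the coefficients of a skew-symmetric pencil as alternating forms `a`, `b` on `V = ℂⁿ`, that is,
as maps `V → V*`. A chain `s` with `a (s 0) = 0` and `a (s (i + 1)) = b (s i)` is isotropic for both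
forms. If it cannot be prolonged, or if it comes from a polynomial null vector of minimal degree,
then linear duality gives vectors `t i` whose functionals `b (t i)`, `a (t i)` run through a chain
`φ` in `V*` with `φ 0 (s 0) = 1`. As `φ i (s j)` depends only on `j - i`, the chain `s` can be
corrected to make `φ` and `s` biorthogonal. The span of `s` and `t` is then an orthogonal direct
summand: a block `M` if `s` comes from a null vector; if there is no null vector, a block `H`,
starting from an eigenvector of `b⁻¹ a`, when `b` is invertible, and a block `K`, starting from the
kernel of `b` with the roles of the forms exchanged, otherwise. Induction on the dimension gives
existence.

For uniqueness, the dimension of the space of initial vectors of Jordan chains of a given length,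
for a given eigenvalue, is a congruence invariant and additive in direct sums. With a free last
vector it is `2` for a block `H` or `K` of that eigenvalue and at least that length, `0` for the
other blocks `H` and `K`, and `1` for every `M`; with last vector zero and eigenvalue `∞` it detects
the blocks `M_m` with `m` small. Hence every multiplicity is a difference of invariants.
-/

section LinearRelations

variable {K U : Type*} [Semiring K] [AddCommMonoid U] [Module K U]

/-- The image of the submodule `Y` under the `k`-th iterate of the linear relation `R` on `U`. -/
def relIter (R : Submodule K (U × U)) (Y : Submodule K U) : ℕ → Submodule K U
  | 0 => Y
  | k + 1 => (R ⊓ (relIter R Y k).comap (LinearMap.fst K U U)).map (LinearMap.snd K U U)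

variable {R : Submodule K (U × U)} {Y : Submodule K U} {k : ℕ} {x : U}

theorem mem_relIter_succ : x ∈ relIter R Y (k + 1) ↔ ∃ y ∈ relIter R Y k, (y, x) ∈ R := by
  simp [relIter, and_comm]

theorem exists_chain_of_mem_relIter (hx : x ∈ relIter R Y k) :
    ∃ c : ℕ → U, c 0 = x ∧ c k ∈ Y ∧ ∀ i < k, (c (i + 1), c i) ∈ R := by
  induction k generalizing x with
  | zero => exact ⟨fun _ => x, rfl, hx, by simp⟩
  | succ k ih =>
    obtain ⟨y, hy, hyx⟩ := mem_relIter_succ.1 hx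
    obtain ⟨c, rfl, hck, hc⟩ := ih hy
    refine ⟨fun | 0 => x | i + 1 => c i, rfl, hck, ?_⟩
    rintro (_ | i) hi
    · exact hyx
    · exact hc i (Nat.lt_of_succ_lt_succ hi)

end LinearRelations

section Alternative

open Module

variable {K V W : Type*} [Field K] [AddCommGroup V] [Module K V]
  [AddCommGroup W] [Module K W] [FiniteDimensional K W]

/- `β.flip p` vanishes on the kernel of `V → W* → W* ⧸ Φ`, hence factors through this map; the
factor is a functional on `W*` vanishing on `Φ`, that is, evaluation at a vector `q`. -/
theorem exists_flip_eq_flip {α β : V →ₗ[K] Dual K W} {Φ : Submodule K (Dual K W)} {p : W}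
    (h : ∀ t, α t ∈ Φ → β t p = 0) :
    ∃ q, α.flip q = β.flip p ∧ ∀ φ ∈ Φ, φ q = 0 := by
  have hp : β.flip p ∈ LinearMap.range (Φ.mkQ ∘ₗ α).dualMap := by
    rw [LinearMap.range_dualMap_eq_dualAnnihilator_ker, Submodule.mem_dualAnnihilator]
    exact fun t ht => h t (by simpa using ht)
  obtain ⟨g, hg⟩ := hp
  obtain ⟨q, hq⟩ := (evalEquiv K W).surjective (g ∘ₗ Φ.mkQ)
  have hgq (φ : Dual K W) : g (Φ.mkQ φ) = φ q := (LinearMap.congr_fun hq φ).symm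
  refine ⟨q, LinearMap.ext fun t => ?_, fun φ hφ => ?_⟩
  · rw [← hg, LinearMap.dualMap_apply, LinearMap.comp_apply, hgq, LinearMap.flip_apply]
  · rw [← hgq, Submodule.mkQ_apply, (Submodule.Quotient.mk_eq_zero Φ).2 hφ, map_zero]

theorem exists_flip_chain_of_relIter_apply_eq_zero {α β : V →ₗ[K] Dual K W}
    {Φ : Submodule K (Dual K W)} {k : ℕ} {p : W}
    (h : ∀ φ ∈ relIter (LinearMap.range (α.prod β)) Φ k, φ p = 0) :
    ∃ z : ℕ → W, z 0 = p ∧ (∀ i < k, α.flip (z (i + 1)) = β.flip (z i)) ∧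
      ∀ φ ∈ Φ, φ (z k) = 0 := by
  induction k generalizing p with
  | zero => exact ⟨fun _ => p, rfl, by simp, h⟩
  | succ k ih =>
    obtain ⟨q, hq, hqk⟩ := exists_flip_eq_flip fun t (ht : α t ∈ relIter _ Φ k) =>
      h (β t) (mem_relIter_succ.2 ⟨α t, ht, t, rfl⟩)
    obtain ⟨z, rfl, hz, hzk⟩ := ih hqk
    refine ⟨fun | 0 => p | i + 1 => z i, rfl, ?_, hzk⟩
    rintro (_ | i) hi
    · exact hq
    · exact hz i (Nat.lt_of_succ_lt_succ hi)

end Alternative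

section JordanChains

variable {K V W : Type*} [CommSemiring K] [AddCommMonoid V] [Module K V]
  [AddCommMonoid W] [Module K W]

/-- `x 0, …, x (k - 1)` is a chain of the pencil `α - λ β`: `α (x (i + 1)) = β (x i)`. -/
def IsPencilChain (α β : V →ₗ[K] W) (k : ℕ) (x : ℕ → V) : Prop :=
  ∀ i, i + 1 < k → α (x (i + 1)) = β (x i)

/-- A Jordan chain of the pencil `α - λ β` for the eigenvalue `0`: modulo `λ ^ k`, the power series
`∑ x i λ ^ i` is annihilated by `α - λ β`. -/
structure IsJordanChain (α β : V →ₗ[K] W) (k : ℕ) (x : ℕ → V) : Prop where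
  chain : IsPencilChain α β k x
  head : α (x 0) = 0

/-- The coefficients of the product of the power series `f` and `∑ x i λ ^ i`. -/
def seriesSMul (f : PowerSeries K) (x : ℕ → V) (n : ℕ) : V :=
  ∑ p ∈ Finset.HasAntidiagonal.antidiagonal n, f.coeff p.2 • x p.1

theorem IsJordanChain.mono {α β : V →ₗ[K] W} {k l : ℕ} {x : ℕ → V} (hx : IsJordanChain α β l x)
    (hkl : k ≤ l) : IsJordanChain α β k x :=
  ⟨fun i hi => hx.chain i (by omega), hx.head⟩

theorem map_seriesSMul (g : V →ₗ[K] W) (f : PowerSeries K) (x : ℕ → V) (n : ℕ) :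
    g (seriesSMul f x n) = seriesSMul f (fun i => g (x i)) n := by
  simp [seriesSMul]

@[simp]
theorem seriesSMul_zero (f : PowerSeries K) (x : ℕ → V) : seriesSMul f x 0 = f.coeff 0 • x 0 := by
  simp [seriesSMul]

theorem seriesSMul_eq_coeff_mul (f : PowerSeries K) (c : ℕ → K) (n : ℕ) :
    seriesSMul f c n = (PowerSeries.mk c * f).coeff n := by
  simp [seriesSMul, PowerSeries.coeff_mul, mul_comm (f.coeff _)]

theorem IsJordanChain.series_smul {α β : V →ₗ[K] W} {k : ℕ} {x : ℕ → V} (hx : IsJordanChain α β k x)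
    (f : PowerSeries K) : IsJordanChain α β k (seriesSMul f x) where
  chain i hi := by
    rw [seriesSMul, Finset.Nat.sum_antidiagonal_succ, map_add, map_smul, hx.head, smul_zero,
      zero_add, map_sum, seriesSMul, map_sum]
    refine Finset.sum_congr rfl fun p hp => ?_
    have := Finset.HasAntidiagonal.mem_antidiagonal.1 hp
    simp only [map_smul, hx.chain p.1 (by omega)]
  head := by rw [seriesSMul_zero, map_smul, hx.head, smul_zero]

/-- The coefficients of a nonzero polynomial null vector `∑ x i λ ^ i`, of degree less than `n`, of
the pencil `α - λ β`. The condition `x n = 0` encodes `β (x (n - 1)) = 0`. -/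
structure IsNullChain (α β : V →ₗ[K] W) (n : ℕ) (x : ℕ → V) : Prop extends
    IsJordanChain α β (n + 1) x where
  head_ne_zero : x 0 ≠ 0
  last_eq_zero : x n = 0

theorem not_isNullChain_of_injective {α β : V →ₗ[K] W} (hβ : Function.Injective β) (n : ℕ)
    (x : ℕ → V) : ¬ IsNullChain α β n x := by
  intro hx
  refine hx.head_ne_zero (Nat.decreasingInduction (motive := fun i _ => x i = 0)
    (fun i hi hxi => hβ ?_) hx.last_eq_zero (Nat.zero_le n))
  rw [← hx.chain i (by omega), hxi, map_zero, map_zero]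

theorem IsNullChain.exists_swap {α β : V →ₗ[K] W} {n : ℕ} {x : ℕ → V} (hx : IsNullChain α β n x) :
    ∃ m y, IsNullChain β α m y := by
  induction n with
  | zero => exact absurd hx.last_eq_zero hx.head_ne_zero
  | succ n ih =>
    by_cases hn : x n = 0
    · exact ih ⟨hx.mono (n + 1).le_succ, hx.head_ne_zero, hn⟩
    · refine ⟨n + 1, fun i => if i ≤ n then x (n - i) else 0, ⟨fun i hi => ?_, ?_⟩, by simpa,
        by simp⟩
      · rcases (Nat.le_of_lt_succ (Nat.lt_of_succ_lt_succ hi)).lt_or_eq with hin | rfl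
        · have hchain := hx.chain (n - (i + 1)) (by omega)
          rw [show n - (i + 1) + 1 = n - i by omega] at hchain
          simp [hin.le, Nat.succ_le_of_lt hin, hchain]
        · simp [hx.head]
      · simp [← hx.chain n (by omega), hx.last_eq_zero]

end JordanChains

section LinearIndependence

variable {K V W : Type*} [Field K] [AddCommGroup V] [Module K V] [AddCommGroup W] [Module K W]

/- If `x k = ∑ c l • x l`, multiply the chain by the power series `1 - ∑ c l λ ^ (k - l)`. -/
theorem IsJordanChain.exists_isNullChain {α β : V →ₗ[K] W} {k : ℕ} {x : ℕ → V}
    (hx : IsJordanChain α β (k + 1) x) (h0 : x 0 ≠ 0)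
    (hk : x k ∈ Submodule.span K (Set.range fun i : Fin k => x i)) :
    ∃ y, IsNullChain α β k y := by
  obtain ⟨c, hc⟩ := (Submodule.mem_span_range_iff_exists_fun K).1 hk
  let d : ℕ → K := fun l => if hl : l < k then -c ⟨l, hl⟩ else 1
  let f : PowerSeries K := PowerSeries.mk fun e => d (k - e)
  have hf {l : ℕ} (hl : l ≤ k) : f.coeff (k - l) = d l := by
    rw [PowerSeries.coeff_mk, Nat.sub_sub_self hl]
  refine ⟨seriesSMul f x, hx.series_smul f, by simpa [f, d] using h0, ?_⟩
  rw [seriesSMul, Finset.Nat.sum_antidiagonal_eq_sum_range_succ_mk, Finset.sum_range_succ,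
    Finset.sum_range, hf le_rfl]
  simp [hf, d, ← hc]

theorem IsJordanChain.linearIndependent {α β : V →ₗ[K] W} {k : ℕ} {x : ℕ → V}
    (hx : IsJordanChain α β k x) (h0 : x 0 ≠ 0) (hnull : ∀ n y, ¬ IsNullChain α β n y) :
    LinearIndependent K fun i : Fin k => x i := by
  induction k with
  | zero => exact linearIndependent_empty_type
  | succ k ih =>
    refine linearIndependent_finSucc'.2 ⟨ih (hx.mono k.le_succ), ?_⟩
    intro hk
    obtain ⟨y, hy⟩ := hx.exists_isNullChain h0 hk
    exact hnull k y hy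

theorem exists_maximal_isJordanChain [FiniteDimensional K V] {α β : V →ₗ[K] W} {v : V}
    (hv : v ≠ 0) (hαv : α v = 0) (hnull : ∀ n y, ¬ IsNullChain α β n y) :
    ∃ k x, 0 < k ∧ IsJordanChain α β k x ∧ x 0 ≠ 0 ∧
      ∀ y, IsJordanChain α β (k + 1) y → y 0 = 0 := by
  let S : Set ℕ := {k | ∃ x, IsJordanChain α β k x ∧ x 0 ≠ 0}
  have hS : BddAbove S := ⟨Module.finrank K V, fun k ⟨x, hx, hx0⟩ => by
    simpa using (hx.linearIndependent hx0 hnull).fintype_card_le_finrank⟩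
  have h1 : 1 ∈ S := ⟨fun _ => v, ⟨fun i hi => by omega, hαv⟩, hv⟩
  obtain ⟨x, hx, hx0⟩ : sSup S ∈ S := Nat.sSup_mem ⟨1, h1⟩ hS
  refine ⟨sSup S, x, le_csSup hS h1, hx, hx0, fun y hy => ?_⟩
  by_contra hy0
  exact (le_csSup hS ⟨y, hy, hy0⟩).not_gt (Nat.lt_succ_self _)

end LinearIndependence

section AlternatingForms

open Module

variable {K V : Type*} [Field K] [AddCommGroup V] [Module K V] {a b : LinearMap.BilinForm K V}

theorem IsPencilChain.apply_apply_add (ha : a.IsAlt) (hb : b.IsAlt) {k : ℕ} {x : ℕ → V}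
    (hx : IsPencilChain a b k x) (i e : ℕ) (hk : i + e < k) : b (x i) (x (i + e)) = 0 := by
  induction e using Nat.twoStepInduction generalizing i with
  | zero => exact hb (x i)
  | one => rw [← hx i hk, ha]
  | more e ih _ =>
    calc b (x i) (x (i + (e + 2))) = a (x (i + 1)) (x (i + (e + 2))) := by
          rw [hx i (by omega)]
      _ = -a (x (i + e + 1 + 1)) (x (i + 1)) := (ha.neg_eq _ _).symm
      _ = -b (x (i + e + 1)) (x (i + 1)) := by rw [hx (i + e + 1) (by omega)]
      _ = b (x (i + 1)) (x (i + 1 + e)) := by rw [hb.neg_eq, add_right_comm]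
      _ = 0 := ih (i + 1) (by omega)

theorem IsPencilChain.right_isotropic (ha : a.IsAlt) (hb : b.IsAlt) {k : ℕ} {x : ℕ → V}
    (hx : IsPencilChain a b k x) {i j : ℕ} (hi : i < k) (hj : j < k) : b (x i) (x j) = 0 := by
  rcases le_total i j with h | h <;> obtain ⟨e, rfl⟩ := Nat.exists_eq_add_of_le h
  · exact hx.apply_apply_add ha hb i e hj
  · rw [← hb.neg_eq, hx.apply_apply_add ha hb j e hi, neg_zero]

theorem IsPencilChain.left_isotropic (ha : a.IsAlt) (hb : b.IsAlt) {k : ℕ} {x : ℕ → V}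
    (hx : IsPencilChain a b k x) {i j : ℕ} (hi : i < k) (hj : j < k) : a (x i) (x j) = 0 := by
  rcases i with _ | i
  · rcases j with _ | j
    · exact ha (x 0)
    · rw [← ha.neg_eq, hx j hj, hx.right_isotropic ha hb (by omega) hi, neg_zero]
  · rw [hx i hi, hx.right_isotropic ha hb (by omega) hj]

/-- Functionals `φ 0, …, φ p` with preimages `t 0, …, t (p - 1)` under both `b` and `a`, shifted
by one: `b (t i) = φ i` and `a (t i) = φ (i + 1)`. -/
def IsDualChain (a b : LinearMap.BilinForm K V) (p : ℕ) (t : ℕ → V) (φ : ℕ → Dual K V) : Prop :=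
  ∀ i < p, b (t i) = φ i ∧ a (t i) = φ (i + 1)

theorem IsDualChain.isPencilChain {p : ℕ} {t : ℕ → V} {φ : ℕ → Dual K V}
    (h : IsDualChain a b p t φ) : IsPencilChain b a p t := fun i hi => by
  rw [(h (i + 1) hi).1, (h i (by omega)).2]

/- For alternating forms, a sequence as in `exists_flip_chain_of_relIter_apply_eq_zero` is a pencil
chain. If there is none, some functional in the iterated relation does not vanish at `v`. -/
theorem exists_isDualChain [FiniteDimensional K V] (ha : a.IsAlt) (hb : b.IsAlt)
    (Φ : Submodule K (Dual K V)) (p : ℕ) (v : V)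
    (h : ∀ z, IsPencilChain a b (p + 1) z → z 0 = v → ∃ φ ∈ Φ, φ (z p) ≠ 0) :
    ∃ t φ, IsDualChain a b p t φ ∧ φ 0 v = 1 ∧ φ p ∈ Φ := by
  have hv : ∃ φ ∈ relIter (LinearMap.range (a.prod b)) Φ p, φ v ≠ 0 := by
    by_contra! hv
    obtain ⟨z, hz0, hz, hzp⟩ := exists_flip_chain_of_relIter_apply_eq_zero hv
    have hchain : IsPencilChain a b (p + 1) z := fun i hi => LinearMap.ext fun w => by
      rw [← ha.neg_eq, ← hb.neg_eq]
      exact congrArg Neg.neg (LinearMap.congr_fun (hz i (by omega)) w)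
    obtain ⟨φ, hφ, hne⟩ := h z hchain hz0
    exact hne (hzp φ hφ)
  obtain ⟨φ₀, hφ₀, hne⟩ := hv
  obtain ⟨φ, h0, hp, hφ⟩ := exists_chain_of_mem_relIter (Submodule.smul_mem _ (φ₀ v)⁻¹ hφ₀)
  choose! t ht using hφ
  refine ⟨t, φ, fun i hi => ?_, ?_, hp⟩
  · exact ⟨congrArg Prod.snd (ht i hi), congrArg Prod.fst (ht i hi)⟩
  · rw [h0, LinearMap.smul_apply, smul_eq_mul, inv_mul_cancel₀ hne]

section Toeplitz

variable {p q : ℕ} {s t : ℕ → V} {φ : ℕ → Dual K V}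

theorem IsDualChain.apply_add_add (h : IsDualChain a b p t φ) (ha : a.IsAlt) (hb : b.IsAlt)
    (hs : IsPencilChain a b q s) (e i j : ℕ) (hi : i + e ≤ p) (hj : j + e < q) :
    φ (i + e) (s (j + e)) = φ i (s j) := by
  induction e with
  | zero => rfl
  | succ e ih =>
    obtain ⟨hbt, hat⟩ := h (i + e) (by omega)
    rw [← ih (by omega) (by omega), ← add_assoc, ← add_assoc, ← hat, ← hbt, ← ha.neg_eq,
      hs _ (by omega), hb.neg_eq]

theorem IsDualChain.apply_eq_zero_of_lt (h : IsDualChain a b p t φ) (ha : a.IsAlt) (hb : b.IsAlt)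
    (hs : IsJordanChain a b q s) {i j : ℕ} (hij : j < i) (hi : i ≤ p) (hj : j < q) :
    φ i (s j) = 0 := by
  obtain ⟨i, rfl⟩ := Nat.exists_eq_add_of_lt hij
  have hslide := h.apply_add_add ha hb hs.chain j (i + 1) 0 (by omega) (by omega)
  rw [zero_add] at hslide
  rw [show j + i + 1 = i + 1 + j by ring, hslide, ← (h i (by omega)).2, ← ha.neg_eq, hs.head,
    LinearMap.zero_apply, neg_zero]

theorem IsDualChain.apply_add_right (h : IsDualChain a b p t φ) (ha : a.IsAlt) (hb : b.IsAlt)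
    (hs : IsPencilChain a b q s) {i e : ℕ} (hi : i ≤ p) (hie : e + i < q) :
    φ i (s (e + i)) = φ 0 (s e) := by
  simpa using h.apply_add_add ha hb hs i 0 e (by omega) hie

theorem IsDualChain.apply_eq_ite (h : IsDualChain a b p t φ) (ha : a.IsAlt) (hb : b.IsAlt)
    (hs : IsJordanChain a b q s) (h0 : ∀ j < q, φ 0 (s j) = if j = 0 then 1 else 0) {i j : ℕ}
    (hi : i ≤ p) (hj : j < q) : φ i (s j) = if i = j then 1 else 0 := by
  rcases lt_or_ge j i with hij | hij
  · rw [h.apply_eq_zero_of_lt ha hb hs hij hi hj, if_neg hij.ne']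
  · obtain ⟨e, rfl⟩ := Nat.exists_eq_add_of_le' hij
    rw [h.apply_add_right ha hb hs.chain hi hj, h0 e (by omega)]
    exact if_congr (by omega) rfl rfl

end Toeplitz

/-- A Jordan chain `s` and a dual chain `(t, φ)` with `φ` biorthogonal to `s`, such that `s` and `t`
together span the support of a direct summand of the pencil `a - λ b`. The lengths satisfy `q = p`
for the regular blocks `H` and `K`, and `q = p + 1` for the singular block `M`. -/
structure IsDualPair (a b : LinearMap.BilinForm K V) (p q : ℕ) (s t : ℕ → V) (φ : ℕ → Dual K V) :
    Prop where
  jordan : IsJordanChain a b q s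
  dual : IsDualChain a b p t φ
  pairing : ∀ i ≤ p, ∀ j < q, φ i (s j) = if i = j then 1 else 0
  le : p ≤ q
  le_succ : q ≤ p + 1
  apply_eq_zero : ∀ j, p ≤ j → j < q → b (s j) = 0
  eq_zero : ∀ i, q ≤ i → i ≤ p → φ i = 0

/- The dual chain of a maximal Jordan chain pairs with it in a Toeplitz matrix; multiplying the
Jordan chain by the inverse of the power series of the first row makes this the identity. -/
theorem exists_isDualPair_of_forall_not_isNullChain [FiniteDimensional K V] (ha : a.IsAlt)
    (hb : b.IsAlt) {v : V} (hv : v ≠ 0) (hav : a v = 0) (hnull : ∀ n y, ¬ IsNullChain a b n y) :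
    ∃ k s t φ, 0 < k ∧ IsDualPair a b k k s t φ := by
  obtain ⟨k, s, hk, hs, hs0, hmax⟩ := exists_maximal_isJordanChain hv hav hnull
  obtain ⟨t, φ, hφ, hφ0, hφk⟩ := exists_isDualChain ha hb ⊥ k (s 0) fun z hz hz0 =>
    absurd (hmax z ⟨hz, hz0 ▸ hs.head⟩) (hz0 ▸ hs0)
  let f : PowerSeries K := PowerSeries.mk fun e => φ 0 (s e)
  have hf : f * f⁻¹ = 1 := PowerSeries.mul_inv_cancel f (by simp [f, hφ0])
  have hs' : IsJordanChain a b k (seriesSMul f⁻¹ s) := hs.series_smul f⁻¹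
  refine ⟨k, seriesSMul f⁻¹ s, t, φ, hk, hs', hφ, ?_, le_rfl, k.le_succ, ?_, ?_⟩
  · refine fun i hi j hj => hφ.apply_eq_ite ha hb hs' (fun j _ => ?_) hi hj
    rw [map_seriesSMul, seriesSMul_eq_coeff_mul, hf, PowerSeries.coeff_one]
  · exact fun j hkj hjk => absurd hjk hkj.not_gt
  · exact fun i hki hik => hik.antisymm hki ▸ hφk

/- A null vector of minimal degree and its dual chain are biorthogonal without any correction. -/
theorem exists_isDualPair_of_isNullChain [FiniteDimensional K V] (ha : a.IsAlt) (hb : b.IsAlt)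
    (hnull : ∃ n y, IsNullChain a b n y) :
    ∃ m s t φ, IsDualPair a b m (m + 1) s t φ := by
  classical
  obtain ⟨s, hs⟩ := Nat.find_spec hnull
  have hmin := @Nat.find_min _ _ hnull
  obtain ⟨m, hm⟩ : ∃ m, Nat.find hnull = m + 1 :=
    Nat.exists_eq_succ_of_ne_zero fun h => hs.head_ne_zero (h ▸ hs.last_eq_zero)
  rw [hm] at hs hmin
  obtain ⟨t, φ, hφ, hφ0, -⟩ := exists_isDualChain ha hb ⊤ m (s 0) fun z hz hz0 => by
    have hzm : z m ≠ 0 := fun hzm =>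
      hmin m.lt_succ_self ⟨z, ⟨hz, hz0 ▸ hs.head⟩, hz0 ▸ hs.head_ne_zero, hzm⟩
    simpa using mt (forall_dual_apply_eq_zero_iff K (z m)).1 hzm
  have hs' : IsJordanChain a b (m + 1) s := hs.toIsJordanChain.mono (Nat.le_succ _)
  refine ⟨m, s, t, φ, hs', hφ, ?_, m.le_succ, le_rfl, ?_, fun i h₁ h₂ => by omega⟩
  · refine fun i hi j hj => hφ.apply_eq_ite ha hb hs' (fun j hj => ?_) hi hj
    rcases j with _ | j
    · rw [hφ0, if_pos rfl]
    · rw [← hφ.apply_add_right ha hb hs.chain (i := m - j) (by omega) (by omega),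
        show j + 1 + (m - j) = m + 1 by omega, hs.last_eq_zero, map_zero, if_neg j.succ_ne_zero]
  · intro j hmj hjm
    rw [← hs.chain j (by omega), show j + 1 = m + 1 by omega, hs.last_eq_zero, map_zero]

end AlternatingForms

section OrthogonalSummands

open Module

variable {K V ι κ : Type*} [Field K] [AddCommGroup V] [Module K V] {a b : LinearMap.BilinForm K V}

/-- The Gram matrix of a family of vectors with respect to a bilinear form. -/
def gramMatrix (a : LinearMap.BilinForm K V) (e : ι → V) : Matrix ι ι K :=
  Matrix.of fun i j => a (e i) (e j)

/-- Some basis of the whole space has Gram matrix `A` for the form `a` and `B` for the form `b`. -/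
def HasGram (a b : LinearMap.BilinForm K V) (A B : Matrix ι ι K) : Prop :=
  ∃ e : Basis ι K V, gramMatrix a e = A ∧ gramMatrix b e = B

/-- `Z` is a complement of the span of the linearly independent family `e`, and is orthogonal to `e`
for both forms. -/
structure IsOrthogonalComplement (a b : LinearMap.BilinForm K V) (e : ι → V) (Z : Submodule K V) :
    Prop where
  linearIndependent : LinearIndependent K e
  isCompl : IsCompl (Submodule.span K (Set.range e)) Z
  left_orthogonal : ∀ i, ∀ z ∈ Z, a (e i) z = 0
  right_orthogonal : ∀ i, ∀ z ∈ Z, b (e i) z = 0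

/-- The pair of forms splits off an orthogonal direct summand with Gram matrices `A` and `B`. -/
def SplitsOff (a b : LinearMap.BilinForm K V) (A B : Matrix ι ι K) : Prop :=
  ∃ e Z, IsOrthogonalComplement a b e Z ∧ gramMatrix a e = A ∧ gramMatrix b e = B

theorem gramMatrix_sumElim (ha : a.IsAlt) {e : ι → V} {f : κ → V} :
    gramMatrix a (Sum.elim e f) = fromBlocks (gramMatrix a e) (of fun i j => a (e i) (f j))
      (-(of fun i j => a (e i) (f j))ᵀ) (gramMatrix a f) := by
  ext (i | i) (j | j)
  · rfl
  · rfl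
  · exact (ha.neg_eq _ _).symm
  · rfl

theorem gramMatrix_sumElim_of_orthogonal (ha : a.IsAlt) {e : ι → V} {f : κ → V}
    (h : ∀ i j, a (e i) (f j) = 0) :
    gramMatrix a (Sum.elim e f) = fromBlocks (gramMatrix a e) 0 0 (gramMatrix a f) := by
  rw [gramMatrix_sumElim ha, show (of fun i j => a (e i) (f j)) = 0 from Matrix.ext h,
    Matrix.transpose_zero, neg_zero]

theorem gramMatrix_sumElim_of_isotropic (ha : a.IsAlt) {e : ι → V} {f : κ → V}
    (he : ∀ i j, a (e i) (e j) = 0) (hf : ∀ i j, a (f i) (f j) = 0) :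
    gramMatrix a (Sum.elim e f) = fromBlocks 0 (of fun i j => a (e i) (f j))
      (-(of fun i j => a (e i) (f j))ᵀ) 0 := by
  rw [gramMatrix_sumElim ha, show gramMatrix a e = 0 from Matrix.ext he,
    show gramMatrix a f = 0 from Matrix.ext hf]

theorem HasGram.submatrix {A B : Matrix ι ι K} (h : HasGram a b A B) (σ : κ ≃ ι) :
    HasGram a b (A.submatrix σ σ) (B.submatrix σ σ) := by
  obtain ⟨e, rfl, rfl⟩ := h
  refine ⟨e.reindex σ.symm, ?_, ?_⟩ <;> ext <;> simp [gramMatrix]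

theorem SplitsOff.submatrix {A B : Matrix ι ι K} (h : SplitsOff a b A B) (σ : κ ≃ ι) :
    SplitsOff a b (A.submatrix σ σ) (B.submatrix σ σ) := by
  obtain ⟨e, Z, he, rfl, rfl⟩ := h
  refine ⟨e ∘ σ, Z, ⟨he.linearIndependent.comp σ σ.injective, ?_, fun i => he.left_orthogonal (σ i),
    fun i => he.right_orthogonal (σ i)⟩, rfl, rfl⟩
  rw [σ.surjective.range_comp]
  exact he.isCompl

theorem SplitsOff.swap {A B : Matrix ι ι K} (h : SplitsOff a b A B) : SplitsOff b a B A :=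
  let ⟨e, Z, he, hA, hB⟩ := h
  ⟨e, Z, ⟨he.linearIndependent, he.isCompl, he.right_orthogonal, he.left_orthogonal⟩, hB, hA⟩

theorem SplitsOff.add_smul {A B : Matrix ι ι K} (h : SplitsOff a b A B) (μ : K) :
    SplitsOff (a + μ • b) b (A + μ • B) B := by
  obtain ⟨e, Z, he, rfl, rfl⟩ := h
  refine ⟨e, Z, ⟨he.linearIndependent, he.isCompl, fun i z hz => ?_, he.right_orthogonal⟩, rfl, rfl⟩
  simp [he.left_orthogonal i z hz, he.right_orthogonal i z hz]

theorem IsOrthogonalComplement.exists_basis {e : ι → V} {Z : Submodule K V}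
    (h : IsOrthogonalComplement a b e Z) (f : Basis κ K Z) :
    ∃ g : Basis (ι ⊕ κ) K V, ⇑g = Sum.elim e fun j => (f j : V) := by
  refine ⟨((Basis.span h.linearIndependent).prod f).map
    (Submodule.prodEquivOfIsCompl _ _ h.isCompl), funext fun i => ?_⟩
  rcases i with i | j <;> simp [Basis.span_apply]

theorem IsOrthogonalComplement.hasGram {e : ι → V} {Z : Submodule K V}
    (h : IsOrthogonalComplement a b e Z) (ha : a.IsAlt) (hb : b.IsAlt) {C D : Matrix κ κ K}
    (hZ : HasGram (a.restrict Z) (b.restrict Z) C D) :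
    HasGram a b (fromBlocks (gramMatrix a e) 0 0 C) (fromBlocks (gramMatrix b e) 0 0 D) := by
  obtain ⟨f, rfl, rfl⟩ := hZ
  obtain ⟨g, hg⟩ := h.exists_basis f
  refine ⟨g, ?_, ?_⟩ <;> rw [hg]
  · exact gramMatrix_sumElim_of_orthogonal ha fun i j => h.left_orthogonal i _ (f j).2
  · exact gramMatrix_sumElim_of_orthogonal hb fun i j => h.right_orthogonal i _ (f j).2

theorem IsOrthogonalComplement.finrank_lt [FiniteDimensional K V] [Nonempty ι] {e : ι → V}
    {Z : Submodule K V} (h : IsOrthogonalComplement a b e Z) : finrank K Z < finrank K V := by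
  refine Submodule.finrank_lt fun hZ => ?_
  obtain ⟨i⟩ := ‹Nonempty ι›
  have hi : e i ∈ (⊥ : Submodule K V) := by
    rw [← eq_bot_of_top_isCompl (hZ ▸ h.isCompl.symm)]
    exact Submodule.subset_span ⟨i, rfl⟩
  exact h.linearIndependent.ne_zero i hi

theorem exists_isOrthogonalComplement_of_biorthogonal [Finite ι] [DecidableEq ι] {e : ι → V}
    (f : ι → Dual K V) (hfe : ∀ i j, f i (e j) = if i = j then 1 else 0)
    (ha : ∀ z, (∀ i, f i z = 0) → ∀ i, a (e i) z = 0)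
    (hb : ∀ z, (∀ i, f i z = 0) → ∀ i, b (e i) z = 0) :
    ∃ Z, IsOrthogonalComplement a b e Z := by
  cases nonempty_fintype ι
  have hproj (i : ι) (c : ι → K) : f i (∑ j, c j • e j) = c i := by simp [hfe]
  have hker (z : V) : z ∈ LinearMap.ker (LinearMap.pi f) ↔ ∀ i, f i z = 0 := by
    simp [funext_iff]
  refine ⟨LinearMap.ker (LinearMap.pi f), ?_, ⟨?_, ?_⟩, fun i z hz => ha z ((hker z).1 hz) i,
    fun i z hz => hb z ((hker z).1 hz) i⟩
  · exact LinearIndependent.of_pairwise_dual_eq_zero_one e f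
      (fun i j hij => (hfe i j).trans (if_neg hij)) fun i => (hfe i i).trans (if_pos rfl)
  · refine Submodule.disjoint_def.2 fun z hz hfz => ?_
    obtain ⟨c, rfl⟩ := (Submodule.mem_span_range_iff_exists_fun K).1 hz
    refine Finset.sum_eq_zero fun i _ => ?_
    rw [← hproj i c, (hker _).1 hfz, zero_smul]
  · refine codisjoint_iff.2 (eq_top_iff.2 fun z _ => Submodule.mem_sup.2
      ⟨∑ j, f j z • e j, ?_, z - ∑ j, f j z • e j, (hker _).2 fun i => ?_, add_sub_cancel _ _⟩)
    · exact (Submodule.mem_span_range_iff_exists_fun K).2 ⟨_, rfl⟩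
    · rw [map_sub, hproj, sub_self]

end OrthogonalSummands

section DualPairs

open Module

variable {K V : Type*} [Field K] [AddCommGroup V] [Module K V] {a b : LinearMap.BilinForm K V}
  {p q : ℕ} {s t : ℕ → V} {φ : ℕ → Dual K V}

theorem IsDualPair.apply_left_eq_zero (h : IsDualPair a b p q s t φ) (ha : a.IsAlt) (hb : b.IsAlt)
    {i j : ℕ} (hi : i ≤ p) (hj : j < p) : φ i (t j) = 0 := by
  rcases hi.lt_or_eq with hi | rfl
  · rw [← (h.dual i hi).1]
    exact h.dual.isPencilChain.left_isotropic hb ha hi hj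
  · obtain _ | i := i
    · exact absurd hj (Nat.not_lt_zero j)
    · rw [← (h.dual i i.lt_succ_self).2]
      exact h.dual.isPencilChain.right_isotropic hb ha i.lt_succ_self hj

theorem IsDualPair.orthogonal_of_biorthogonal (h : IsDualPair a b p q s t φ) (hb : b.IsAlt) {z : V}
    (hs : ∀ i < p, b z (s i) = 0) (hφ : ∀ j < q, φ j z = 0) :
    (∀ i < p, a (t i) z = 0 ∧ b (t i) z = 0) ∧ ∀ j < q, a (s j) z = 0 ∧ b (s j) z = 0 := by
  have hφ' (i : ℕ) (hi : i ≤ p) : φ i z = 0 := by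
    rcases lt_or_ge i q with hiq | hqi
    · exact hφ i hiq
    · rw [h.eq_zero i hqi hi, LinearMap.zero_apply]
  have hbs (j : ℕ) (hj : j < q) : b (s j) z = 0 := by
    rcases lt_or_ge j p with hjp | hpj
    · rw [← hb.neg_eq, hs j hjp, neg_zero]
    · rw [h.apply_eq_zero j hpj hj, LinearMap.zero_apply]
  refine ⟨fun i hi => ⟨?_, ?_⟩, fun j hj => ⟨?_, hbs j hj⟩⟩
  · rw [(h.dual i hi).2, hφ' (i + 1) hi]
  · rw [(h.dual i hi).1, hφ' i hi.le]
  · obtain _ | j := j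
    · rw [h.jordan.head, LinearMap.zero_apply]
    · rw [h.jordan.chain j hj, hbs j (by omega)]

/- The family `t, s` is biorthogonal to the functionals `b · (s i), φ j`. -/
theorem IsDualPair.exists_isOrthogonalComplement (h : IsDualPair a b p q s t φ) (ha : a.IsAlt)
    (hb : b.IsAlt) :
    ∃ Z, IsOrthogonalComplement a b
      (Sum.elim (fun i : Fin p => t i) fun j : Fin q => s j) Z := by
  have hpq := h.le
  have hqp := h.le_succ
  have hZ (z : V) (hz : ∀ i, (Sum.elim (fun i : Fin p => b.flip (s i)) fun j : Fin q => φ j :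
      Fin p ⊕ Fin q → Dual K V) i z = 0) :=
    h.orthogonal_of_biorthogonal hb (fun i hi => hz (.inl ⟨i, hi⟩)) fun j hj => hz (.inr ⟨j, hj⟩)
  refine exists_isOrthogonalComplement_of_biorthogonal
    (Sum.elim (fun i : Fin p => b.flip (s i)) fun j : Fin q => φ j) ?_ ?_ ?_
  · rintro (i | i) (j | j)
    · change b (t j) (s i) = _
      rw [(h.dual j j.2).1, h.pairing _ j.2.le _ (by omega)]
      simp [Fin.ext_iff, eq_comm]
    · exact h.jordan.chain.right_isotropic ha hb j.2 (by omega)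
    · exact h.apply_left_eq_zero ha hb (by omega) j.2
    · change φ i (s j) = _
      rw [h.pairing _ (by omega) _ j.2]
      simp [Fin.ext_iff]
  · rintro z hz (i | j)
    exacts [((hZ z hz).1 i i.2).1, ((hZ z hz).2 j j.2).1]
  · rintro z hz (i | j)
    exacts [((hZ z hz).1 i i.2).2, ((hZ z hz).2 j j.2).2]

theorem IsDualPair.splitsOff (h : IsDualPair a b p q s t φ) (ha : a.IsAlt) (hb : b.IsAlt)
    {X Y : Matrix (Fin p) (Fin q) K} (hX : ∀ i j, X i j = if (j : ℕ) = i + 1 then 1 else 0)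
    (hY : ∀ i j, Y i j = if (j : ℕ) = i then 1 else 0) :
    SplitsOff a b (fromBlocks 0 X (-Xᵀ) 0) (fromBlocks 0 Y (-Yᵀ) 0) := by
  obtain ⟨Z, hZ⟩ := h.exists_isOrthogonalComplement ha hb
  have hXts : (of fun (i : Fin p) (j : Fin q) => a (t i) (s j)) = X := by
    ext i j
    rw [of_apply, (h.dual i i.2).2, h.pairing _ i.2 _ j.2, hX]
    exact if_congr eq_comm rfl rfl
  have hYts : (of fun (i : Fin p) (j : Fin q) => b (t i) (s j)) = Y := by
    ext i j
    rw [of_apply, (h.dual i i.2).1, h.pairing _ i.2.le _ j.2, hY]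
    exact if_congr eq_comm rfl rfl
  refine ⟨_, Z, hZ, ?_, ?_⟩
  · rw [gramMatrix_sumElim_of_isotropic ha, hXts]
    · exact fun i j => h.dual.isPencilChain.right_isotropic hb ha i.2 j.2
    · exact fun i j => h.jordan.chain.left_isotropic ha hb i.2 j.2
  · rw [gramMatrix_sumElim_of_isotropic hb, hYts]
    · exact fun i j => h.dual.isPencilChain.left_isotropic hb ha i.2 j.2
    · exact fun i j => h.jordan.chain.right_isotropic ha hb i.2 j.2

end DualPairs

section CanonicalBlocks

theorem Jmat_eq_add_smul_one (k : ℕ) (μ : ℂ) : Jmat k μ = Jmat k 0 + μ • 1 := by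
  ext i j
  simp only [Jmat, of_apply, Matrix.add_apply, Matrix.smul_apply, one_apply, Fin.ext_iff]
  split_ifs <;> first | omega | simp

theorem skewPair_add_smul {p q : ℕ} (X Y : Matrix (Fin p) (Fin q) ℂ) (μ : ℂ) :
    skewPair (X + μ • Y) = skewPair X + μ • skewPair Y := by
  ext i j
  simp only [skewPair, Matrix.add_apply, Matrix.smul_apply, submatrix_apply]
  rcases finSumFinEquiv.symm i with i | i <;> rcases finSumFinEquiv.symm j with j | j <;>
    simp [add_comm]

end CanonicalBlocks

section Existence

open Module

variable {V : Type*} [AddCommGroup V] [Module ℂ V] {a b : LinearMap.BilinForm ℂ V}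

theorem IsDualPair.splitsOff_Jmat_zero {k : ℕ} {s t : ℕ → V} {φ : ℕ → Dual ℂ V}
    (h : IsDualPair a b k k s t φ) (ha : a.IsAlt) (hb : b.IsAlt) :
    SplitsOff a b (skewPair (Jmat k 0)) (skewPair (1 : Matrix (Fin k) (Fin k) ℂ)) := by
  refine (h.splitsOff ha hb (fun i j => ?_) fun i j => ?_).submatrix finSumFinEquiv.symm
  · simp only [Jmat, of_apply]
    split_ifs <;> first | omega | rfl
  · simp [one_apply, Fin.ext_iff, eq_comm]

theorem exists_splitsOff_H [FiniteDimensional ℂ V] [Nontrivial V] (ha : a.IsAlt) (hb : b.IsAlt)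
    (hinj : Function.Injective b) :
    ∃ k μ, 1 ≤ k ∧ SplitsOff a b (Hblk k μ).1 (Hblk k μ).2 := by
  let E : V ≃ₗ[ℂ] Dual ℂ V :=
    LinearEquiv.ofInjectiveOfFinrankEq b hinj Subspace.dual_finrank_eq.symm
  obtain ⟨μ, hμ⟩ := Module.End.exists_eigenvalue (E.symm.toLinearMap.comp a)
  obtain ⟨v, hv⟩ := hμ.exists_hasEigenvector
  have hav : (a - μ • b) v = 0 := by
    have hEv : E.symm (a v) = μ • v := hv.apply_eq_smul
    rw [LinearEquiv.symm_apply_eq, map_smul] at hEv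
    rw [LinearMap.sub_apply, hEv, LinearMap.smul_apply]
    exact sub_self _
  have hα : (a - μ • b).IsAlt := fun x => by simp [ha x, hb x]
  obtain ⟨k, s, t, φ, hk, h⟩ := exists_isDualPair_of_forall_not_isNullChain hα hb hv.2 hav
    (not_isNullChain_of_injective hinj)
  refine ⟨k, μ, hk, ?_⟩
  have hsplit := (h.splitsOff_Jmat_zero hα hb).add_smul μ
  rwa [sub_add_cancel, ← skewPair_add_smul, ← Jmat_eq_add_smul_one] at hsplit

theorem exists_splitsOff_K [FiniteDimensional ℂ V] (ha : a.IsAlt) (hb : b.IsAlt)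
    (hnull : ∀ n y, ¬ IsNullChain a b n y) (hinj : ¬ Function.Injective b) :
    ∃ k, 1 ≤ k ∧ SplitsOff a b (Kblk k).1 (Kblk k).2 := by
  obtain ⟨v, hbv, hv⟩ : ∃ v, b v = 0 ∧ v ≠ 0 := by
    by_contra! h
    exact hinj ((injective_iff_map_eq_zero b).2 h)
  obtain ⟨k, s, t, φ, hk, h⟩ := exists_isDualPair_of_forall_not_isNullChain hb ha hv hbv
    fun n y hy => let ⟨m, x, hx⟩ := hy.exists_swap; hnull m x hx
  exact ⟨k, hk, (h.splitsOff_Jmat_zero hb ha).swap⟩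

theorem exists_splitsOff_M [FiniteDimensional ℂ V] (ha : a.IsAlt) (hb : b.IsAlt)
    (hnull : ∃ n y, IsNullChain a b n y) :
    ∃ m, SplitsOff a b (Mblk m).1 (Mblk m).2 := by
  obtain ⟨m, s, t, φ, h⟩ := exists_isDualPair_of_isNullChain ha hb hnull
  exact ⟨m, (h.splitsOff ha hb (fun _ _ => rfl) fun _ _ => rfl).submatrix finSumFinEquiv.symm⟩

theorem exists_splitsOff_toPencil [FiniteDimensional ℂ V] [Nontrivial V] (ha : a.IsAlt)
    (hb : b.IsAlt) :
    ∃ d : SBlock, d.valid ∧ SplitsOff a b d.toPencil.1 d.toPencil.2 := by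
  by_cases hnull : ∃ n y, IsNullChain a b n y
  · obtain ⟨m, h⟩ := exists_splitsOff_M ha hb hnull
    exact ⟨.M m, trivial, h⟩
  by_cases hinj : Function.Injective b
  · obtain ⟨k, μ, hk, h⟩ := exists_splitsOff_H ha hb hinj
    exact ⟨.H k μ, hk, h⟩
  · push Not at hnull
    obtain ⟨k, hk, h⟩ := exists_splitsOff_K ha hb hnull hinj
    exact ⟨.K k, hk, h⟩

theorem SBlock.valid.size_pos {d : SBlock} (hd : d.valid) : 0 < d.size := by
  cases d <;> simp only [SBlock.valid, SBlock.size] at hd ⊢ <;> omega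

theorem exists_hasGram_spencilOfList [FiniteDimensional ℂ V] (ha : a.IsAlt) (hb : b.IsAlt) :
    ∃ l : List SBlock, (∀ d ∈ l, d.valid) ∧
      HasGram a b (spencilOfList l).1 (spencilOfList l).2 := by
  induction hn : finrank ℂ V using Nat.strong_induction_on generalizing V with
  | _ n ih =>
  rcases subsingleton_or_nontrivial V with hV | hV
  · have : IsEmpty (Fin (sizeSum [])) := inferInstanceAs (IsEmpty (Fin 0))
    exact ⟨[], by simp, Basis.empty V, Subsingleton.elim _ _, Subsingleton.elim _ _⟩
  · obtain ⟨d, hd, e, Z, hZ, hA, hB⟩ := exists_splitsOff_toPencil ha hb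
    have : Nonempty (Fin d.size) := ⟨⟨0, hd.size_pos⟩⟩
    obtain ⟨l, hl, hlZ⟩ := ih _ (hn ▸ hZ.finrank_lt) (a := a.restrict Z) (b := b.restrict Z)
      (fun x => ha x) (fun x => hb x) rfl
    have hgram := (hZ.hasGram ha hb hlZ).submatrix finSumFinEquiv.symm
    rw [hA, hB] at hgram
    exact ⟨d :: l, by simpa using ⟨hd, hl⟩, hgram⟩

theorem isAlt_toBilin' {K ι : Type*} [Field K] [CharZero K] [Fintype ι] [DecidableEq ι]
    {A : Matrix ι ι K} (hA : Aᵀ = -A) :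
    (Matrix.toBilin' A).IsAlt := fun x => by
  have hneg : x ⬝ᵥ A *ᵥ x = -(x ⬝ᵥ A *ᵥ x) :=
    calc x ⬝ᵥ A *ᵥ x = Aᵀ *ᵥ x ⬝ᵥ x := by rw [dotProduct_mulVec, mulVec_transpose]
      _ = -(x ⬝ᵥ A *ᵥ x) := by rw [hA, neg_mulVec, neg_dotProduct, dotProduct_comm]
  rw [Matrix.toBilin'_apply']
  exact self_eq_neg.1 hneg

theorem HasGram.congruent {n : ℕ} {P Q : Pencil n n}
    (h : HasGram (Matrix.toBilin' P.1) (Matrix.toBilin' P.2) Q.1 Q.2) : Pencil.Congruent Q P := by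
  obtain ⟨e, hA, hB⟩ := h
  let E : Matrix (Fin n) (Fin n) ℂ := (Pi.basisFun ℂ (Fin n)).toMatrix e
  let F : Matrix (Fin n) (Fin n) ℂ := e.toMatrix (Pi.basisFun ℂ (Fin n))
  have hEF : E * F = 1 := Basis.toMatrix_mul_toMatrix_flip _ _
  have hgram (A : Matrix (Fin n) (Fin n) ℂ) : Fᵀ * gramMatrix (Matrix.toBilin' A) e * F = A := by
    have : gramMatrix (Matrix.toBilin' A) e = Eᵀ * A * E := by
      ext i j
      rw [gramMatrix, of_apply, Matrix.toBilin'_apply', Matrix.mul_assoc, Matrix.mul_apply]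
      rfl
    calc Fᵀ * gramMatrix (Matrix.toBilin' A) e * F = (E * F)ᵀ * A * (E * F) := by
          rw [this, transpose_mul]
          simp only [Matrix.mul_assoc]
      _ = A := by rw [hEF, transpose_one, Matrix.one_mul, Matrix.mul_one]
  exact ⟨F, IsUnit.of_mul_eq_one_right E hEF, hA ▸ hgram P.1, hB ▸ hgram P.2⟩

theorem Pencil.IsSkew.exists_representsC {n : ℕ} {P : Pencil n n} (hP : P.IsSkew) :
    ∃ s, RepresentsC P s := by
  obtain ⟨l, hl, h⟩ := exists_hasGram_spencilOfList (isAlt_toBilin' hP.1) (isAlt_toBilin' hP.2)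
  have hn : sizeSum l = n := by
    obtain ⟨e, -, -⟩ := h
    simpa using (finrank_eq_card_basis e).symm
  subst hn
  exact ⟨l, hl, l, rfl, rfl, h.congruent⟩

end Existence

section ChainHeads

variable {K V W V' W' : Type*} [Field K] [AddCommGroup V] [Module K V] [AddCommGroup W] [Module K W]
  [AddCommGroup V'] [Module K V'] [AddCommGroup W'] [Module K W']

/-- The condition on the last vector of a Jordan chain: arbitrary, or zero. -/
inductive ChainEnd
  | free
  | zero

/-- The subspace of the last vectors allowed by a `ChainEnd`. -/
def ChainEnd.submodule (K V : Type*) [Field K] [AddCommGroup V] [Module K V] :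
    ChainEnd → Submodule K V
  | free => ⊤
  | zero => ⊥

/-- The initial vectors `c 0` of the Jordan chains `c 0, …, c k` with `c k` as prescribed by `t`. -/
def chainHeads (t : ChainEnd) (α β : V →ₗ[K] W) (k : ℕ) : Submodule K V where
  carrier := {x | ∃ c, IsJordanChain α β (k + 1) c ∧ c k ∈ t.submodule K V ∧ c 0 = x}
  zero_mem' := ⟨0, ⟨fun _ _ => by simp, map_zero α⟩, zero_mem _, rfl⟩
  add_mem' := by
    rintro _ _ ⟨c, hc, hck, rfl⟩ ⟨d, hd, hdk, rfl⟩
    exact ⟨c + d, ⟨fun i hi => by simp [hc.chain i hi, hd.chain i hi], by simp [hc.head, hd.head]⟩,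
      add_mem hck hdk, rfl⟩
  smul_mem' := by
    rintro r _ ⟨c, hc, hck, rfl⟩
    exact ⟨r • c, ⟨fun i hi => by simp [hc.chain i hi], by simp [hc.head]⟩,
      Submodule.smul_mem _ r hck, rfl⟩

/-- The dimension of the space of initial vectors of Jordan chains: the invariant from which the
multiplicities of the canonical blocks are computed. -/
def headRank (t : ChainEnd) (α β : V →ₗ[K] W) (k : ℕ) : ℕ :=
  Module.finrank K (chainHeads t α β k)

variable {t : ChainEnd} {α β : V →ₗ[K] W} {α' β' : V' →ₗ[K] W'} {k : ℕ}

theorem chainHeads_le_ker : chainHeads t α β k ≤ LinearMap.ker α := by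
  rintro _ ⟨c, hc, -, rfl⟩
  exact hc.head

theorem isJordanChain_equiv_comp_iff (e : V ≃ₗ[K] V')
    (h : ∀ x y, α' (e y) = β' (e x) ↔ α y = β x) {c : ℕ → V} :
    IsJordanChain α' β' k (e ∘ c) ↔ IsJordanChain α β k c := by
  have hhead : α' (e (c 0)) = 0 ↔ α (c 0) = 0 := by simpa using h 0 (c 0)
  exact ⟨fun hc => ⟨fun i hi => (h _ _).1 (hc.chain i hi), hhead.1 hc.head⟩,
    fun hc => ⟨fun i hi => (h _ _).2 (hc.chain i hi), hhead.2 hc.head⟩⟩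

theorem headRank_eq_of_equiv (e : V ≃ₗ[K] V') (h : ∀ x y, α' (e y) = β' (e x) ↔ α y = β x) :
    headRank t α' β' k = headRank t α β k := by
  have hend (x : V) : e x ∈ t.submodule K V' ↔ x ∈ t.submodule K V := by
    cases t <;> simp [ChainEnd.submodule]
  have hmap : chainHeads t α' β' k = (chainHeads t α β k).map e.toLinearMap := by
    ext x
    obtain ⟨x, rfl⟩ := e.surjective x
    rw [Submodule.mem_map_equiv, e.symm_apply_apply]
    refine e.surjective.comp_left.exists.trans (exists_congr fun c => ?_)
    exact and_congr (isJordanChain_equiv_comp_iff e h) (and_congr (hend _) e.injective.eq_iff)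
  rw [headRank, headRank, hmap, LinearEquiv.finrank_map_eq]

theorem isJordanChain_prodMap_iff {c : ℕ → V × V'} :
    IsJordanChain (α.prodMap α') (β.prodMap β') k c ↔
      IsJordanChain α β k (Prod.fst ∘ c) ∧ IsJordanChain α' β' k (Prod.snd ∘ c) :=
  ⟨fun hc => ⟨⟨fun i hi => congrArg Prod.fst (hc.chain i hi), congrArg Prod.fst hc.head⟩,
      ⟨fun i hi => congrArg Prod.snd (hc.chain i hi), congrArg Prod.snd hc.head⟩⟩,
    fun ⟨hc, hc'⟩ => ⟨fun i hi => Prod.ext (hc.chain i hi) (hc'.chain i hi),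
      Prod.ext hc.head hc'.head⟩⟩

theorem finrank_submodule_prod [FiniteDimensional K V] [FiniteDimensional K V']
    (p : Submodule K V) (q : Submodule K V') :
    Module.finrank K (p.prod q) = Module.finrank K p + Module.finrank K q := by
  have hinj : Function.Injective (p.subtype.prodMap q.subtype) :=
    Prod.map_injective.2 ⟨p.subtype_injective, q.subtype_injective⟩
  rw [← Module.finrank_prod, ← LinearMap.finrank_range_of_inj hinj, LinearMap.range_prodMap,
    Submodule.range_subtype, Submodule.range_subtype]

theorem headRank_prodMap [FiniteDimensional K V] [FiniteDimensional K V'] :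
    headRank t (α.prodMap α') (β.prodMap β') k = headRank t α β k + headRank t α' β' k := by
  have hend (x : V × V') : x ∈ t.submodule K (V × V') ↔
      x.1 ∈ t.submodule K V ∧ x.2 ∈ t.submodule K V' := by
    cases t <;> simp [ChainEnd.submodule, Prod.ext_iff]
  have hprod : chainHeads t (α.prodMap α') (β.prodMap β') k =
      (chainHeads t α β k).prod (chainHeads t α' β' k) := by
    ext x
    constructor
    · rintro ⟨c, hc, hck, rfl⟩
      obtain ⟨hc, hc'⟩ := isJordanChain_prodMap_iff.1 hc
      exact ⟨⟨_, hc, ((hend _).1 hck).1, rfl⟩, ⟨_, hc', ((hend _).1 hck).2, rfl⟩⟩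
    · rintro ⟨⟨c, hc, hck, h⟩, c', hc', hck', h'⟩
      exact ⟨fun i => (c i, c' i), isJordanChain_prodMap_iff.2 ⟨hc, hc'⟩, (hend _).2 ⟨hck, hck'⟩,
        Prod.ext h h'⟩
  rw [headRank, hprod, finrank_submodule_prod, headRank, headRank]

theorem headRank_eq_zero_of_forall (h : ∀ c, IsJordanChain α β (k + 1) c →
    c k ∈ t.submodule K V → c 0 = 0) : headRank t α β k = 0 := by
  have hbot : chainHeads t α β k = ⊥ := (Submodule.eq_bot_iff _).2 <| by
    rintro _ ⟨c, hc, hck, rfl⟩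
    exact h c hc hck
  rw [headRank, hbot, finrank_bot]

theorem headRank_eq_zero_of_injective_left (hα : Function.Injective α) :
    headRank t α β k = 0 :=
  headRank_eq_zero_of_forall fun _ hc _ => (map_eq_zero_iff α hα).1 hc.head

theorem headRank_zero_eq_zero_of_injective_right (hβ : Function.Injective β) :
    headRank .zero α β k = 0 :=
  headRank_eq_zero_of_forall fun c hc hck => by
    by_contra hc0
    exact not_isNullChain_of_injective hβ k c ⟨hc, hc0, hck⟩

theorem headRank_eq_one {v : V} (hv : v ≠ 0) (hker : ∀ x, α x = 0 → x ∈ K ∙ v)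
    (hmem : v ∈ chainHeads t α β k) : headRank t α β k = 1 := by
  have hspan : chainHeads t α β k = K ∙ v :=
    le_antisymm (fun x hx => hker x (chainHeads_le_ker hx)) (by simpa using hmem)
  rw [headRank, hspan, finrank_span_singleton hv]

theorem headRank_free_add_finrank_of_surjective [FiniteDimensional K V]
    (hα : Function.Surjective α) :
    headRank .free α β k + Module.finrank K W = Module.finrank K V := by
  have hchain (x : V) (hx : α x = 0) : ∃ c, IsJordanChain α β (k + 1) c ∧ c 0 = x := by
    choose g hg using hα
    exact ⟨fun i => Nat.rec x (fun _ y => g (β y)) i, ⟨fun i _ => hg _, hx⟩, rfl⟩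
  have hker : chainHeads .free α β k = LinearMap.ker α :=
    le_antisymm chainHeads_le_ker fun x hx =>
      let ⟨c, hc, hc0⟩ := hchain x hx
      ⟨c, hc, trivial, hc0⟩
  rw [headRank, hker, add_comm, ← LinearMap.finrank_range_add_finrank_ker α,
    LinearMap.range_eq_top.2 hα, finrank_top]

end ChainHeads

section MatrixHeadRank

variable {K m n m' n' : Type*} [Field K] [Fintype n] [Fintype n'] {t : ChainEnd} {k : ℕ}

theorem headRank_mulVecLin_mul_mul [Fintype m] [DecidableEq m] [DecidableEq n] {S : Matrix m m K}
    {R : Matrix n n K} (hS : IsUnit S) (hR : IsUnit R) (A B : Matrix m n K) :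
    headRank t (S * A * R).mulVecLin (S * B * R).mulVecLin k =
      headRank t A.mulVecLin B.mulVecLin k := by
  refine (headRank_eq_of_equiv (LinearEquiv.ofBijective R.mulVecLin
    ⟨mulVec_injective_of_isUnit hR, mulVec_surjective_iff_isUnit.2 hR⟩) fun x y => ?_).symm
  simp only [mulVecLin_apply, ← mulVec_mulVec]
  exact (mulVec_injective_of_isUnit hS).eq_iff.symm

theorem headRank_mulVecLin_neg (A B : Matrix m n K) :
    headRank t (-A).mulVecLin (-B).mulVecLin k = headRank t A.mulVecLin B.mulVecLin k :=
  headRank_eq_of_equiv (LinearEquiv.refl K _) fun x y => by simp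

theorem headRank_mulVecLin_submatrix (σ : m' ≃ m) (τ : n' ≃ n) (A B : Matrix m n K) :
    headRank t (A.submatrix σ τ).mulVecLin (B.submatrix σ τ).mulVecLin k =
      headRank t A.mulVecLin B.mulVecLin k := by
  refine (headRank_eq_of_equiv (LinearEquiv.funCongrLeft K K τ.symm) fun x y => ?_).symm
  simp only [mulVecLin_apply, submatrix_mulVec_equiv]
  exact σ.surjective.injective_comp_right.eq_iff.symm

theorem headRank_mulVecLin_fromBlocks (A B : Matrix m n K) (C D : Matrix m' n' K) :
    headRank t (fromBlocks A 0 0 C).mulVecLin (fromBlocks B 0 0 D).mulVecLin k =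
      headRank t A.mulVecLin B.mulVecLin k + headRank t C.mulVecLin D.mulVecLin k := by
  rw [← headRank_prodMap]
  refine (headRank_eq_of_equiv (LinearEquiv.sumArrowLequivProdArrow n n' K K) fun x y => ?_).symm
  simp only [mulVecLin_apply, fromBlocks_mulVec, zero_mulVec, add_zero, zero_add,
    LinearMap.prodMap_apply, Prod.ext_iff, Sum.elim_eq_iff]
  rfl

theorem headRank_mulVecLin_skewPair {p q : ℕ} (X Y : Matrix (Fin p) (Fin q) ℂ) :
    headRank t (skewPair X).mulVecLin (skewPair Y).mulVecLin k =
      headRank t X.mulVecLin Y.mulVecLin k + headRank t Xᵀ.mulVecLin Yᵀ.mulVecLin k := by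
  rw [← headRank_mulVecLin_neg Xᵀ, ← headRank_mulVecLin_fromBlocks, skewPair, skewPair,
    headRank_mulVecLin_submatrix, ← headRank_mulVecLin_submatrix (Equiv.refl _) (Equiv.sumComm _ _)]
  simp [fromBlocks_submatrix_sum_swap_right]

theorem injective_mulVecLin_transpose [Fintype m] {A : Matrix m n K}
    (hA : Function.Surjective A.mulVecLin) : Function.Injective Aᵀ.mulVecLin := by
  rw [injective_iff_map_eq_zero]
  intro v hv
  refine dotProduct_eq_zero _ fun w => ?_
  obtain ⟨x, rfl⟩ := hA w
  rw [mulVecLin_apply, dotProduct_mulVec, ← mulVec_transpose, ← mulVecLin_apply, hv,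
    zero_dotProduct]

end MatrixHeadRank

section Probes

namespace Pencil

variable {m n p q : ℕ} {o : Option ℂ} {t : ChainEnd} {k : ℕ}

/-- The Möbius transformation of a pencil that moves the eigenvalue `o ∈ ℂ ∪ {∞}` to `0`; as in
`Hb`, `none` encodes `∞`. -/
def probe : Option ℂ → Pencil m n → Pencil m n
  | some μ, P => (P.1 - μ • P.2, P.2)
  | none, P => (P.2, P.1)

/-- The dimension of the space of initial vectors of the Jordan chains of a pencil for the
eigenvalue `o`, of length `k + 1` and with last vector prescribed by `t`. -/
def probeRank (o : Option ℂ) (t : ChainEnd) (k : ℕ) (P : Pencil m n) : ℕ :=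
  headRank t (probe o P).1.mulVecLin (probe o P).2.mulVecLin k

theorem Congruent.probe {P Q : Pencil n n} (h : Congruent P Q) (o : Option ℂ) :
    Congruent (P.probe o) (Q.probe o) := by
  obtain ⟨S, hS, h₁, h₂⟩ := h
  cases o with
  | none => exact ⟨S, hS, h₂, h₁⟩
  | some μ =>
    refine ⟨S, hS, ?_, h₂⟩
    simp [Pencil.probe, ← h₁, ← h₂, Matrix.mul_sub, Matrix.sub_mul]

theorem Congruent.probeRank_eq {P Q : Pencil n n} (h : Congruent P Q) :
    Q.probeRank o t k = P.probeRank o t k := by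
  obtain ⟨S, hS, h₁, h₂⟩ := h.probe o
  rw [probeRank, ← h₁, ← h₂, headRank_mulVecLin_mul_mul ((isUnit_transpose S).2 hS) hS, probeRank]

theorem probe_dsum (P : Pencil m n) (Q : Pencil p q) :
    (dsum P Q).probe o = dsum (P.probe o) (Q.probe o) := by
  cases o with
  | none => rfl
  | some μ =>
    refine Prod.ext ?_ rfl
    ext i j
    simp only [dsum, probe, Matrix.sub_apply, Matrix.smul_apply, submatrix_apply]
    rcases finSumFinEquiv.symm i with i | i <;> rcases finSumFinEquiv.symm j with j | j <;> simp

theorem probeRank_dsum (P : Pencil m n) (Q : Pencil p q) :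
    (dsum P Q).probeRank o t k = P.probeRank o t k + Q.probeRank o t k := by
  rw [probeRank, probe_dsum, dsum, headRank_mulVecLin_submatrix, headRank_mulVecLin_fromBlocks,
    probeRank, probeRank]

theorem probeRank_spencilOfList (l : List SBlock) :
    (spencilOfList l).probeRank o t k = (l.map fun d => d.toPencil.probeRank o t k).sum := by
  induction l with
  | nil =>
    have : Subsingleton (Fin (sizeSum []) → ℂ) := inferInstanceAs (Subsingleton (Fin 0 → ℂ))
    exact headRank_eq_zero_of_injective_left (Function.injective_of_subsingleton _)
  | cons d l ih =>
    rw [List.map_cons, List.sum_cons, ← ih]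
    exact probeRank_dsum d.toPencil (spencilOfList l)

theorem probe_skewPair (P : Pencil p q) :
    probe o (skewPair P.1, skewPair P.2) = (skewPair (P.probe o).1, skewPair (P.probe o).2) := by
  cases o with
  | none => rfl
  | some μ => simp only [probe, sub_eq_add_neg, ← neg_smul, skewPair_add_smul]

theorem probeRank_skewPair (P : Pencil p q) :
    probeRank o t k (skewPair P.1, skewPair P.2) =
      headRank t (P.probe o).1.mulVecLin (P.probe o).2.mulVecLin k +
        headRank t (P.probe o).1ᵀ.mulVecLin (P.probe o).2ᵀ.mulVecLin k := by
  rw [probeRank, probe_skewPair, headRank_mulVecLin_skewPair]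

end Pencil

end Probes

section BlockChains

variable {h m k : ℕ}

theorem Fmat_mulVec_apply (x : Fin (m + 1) → ℂ) (i : Fin m) : (Fmat m *ᵥ x) i = x i.succ := by
  rw [mulVec, dotProduct, Finset.sum_eq_single i.succ]
  · simp [Fmat]
  · intro j _ hj
    simp [Fmat, show (j : ℕ) ≠ i + 1 from fun h => hj (Fin.ext h)]
  · simp

theorem Gmat_mulVec_apply (x : Fin (m + 1) → ℂ) (i : Fin m) : (Gmat m *ᵥ x) i = x i.castSucc := by
  rw [mulVec, dotProduct, Finset.sum_eq_single i.castSucc]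
  · simp [Gmat]
  · intro j _ hj
    simp [Gmat, show (j : ℕ) ≠ i from fun h => hj (Fin.ext h)]
  · simp

theorem Jmat_zero_mulVec_apply (x : Fin h → ℂ) (i : Fin h) :
    (Jmat h 0 *ᵥ x) i = if hi : (i : ℕ) + 1 < h then x ⟨i + 1, hi⟩ else 0 := by
  have hJ (j : Fin h) : Jmat h 0 i j = if (j : ℕ) = i + 1 then 1 else 0 := by
    simp only [Jmat, of_apply]
    split_ifs <;> first | rfl | omega
  simp only [mulVec, dotProduct, hJ]
  split_ifs with hi
  · rw [Finset.sum_eq_single ⟨i + 1, hi⟩]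
    · simp
    · intro j _ hj
      simp [show (j : ℕ) ≠ i + 1 from fun h => hj (Fin.ext h)]
    · simp
  · exact Finset.sum_eq_zero fun j _ => by rw [if_neg (by omega), zero_mul]

theorem Gmat_surjective (m : ℕ) : Function.Surjective (Gmat m).mulVecLin := fun y =>
  ⟨Fin.snoc y 0, funext fun i => by rw [mulVecLin_apply, Gmat_mulVec_apply, Fin.snoc_castSucc]⟩

theorem Fmat_sub_smul_Gmat_surjective (m : ℕ) (μ : ℂ) :
    Function.Surjective (Fmat m - μ • Gmat m).mulVecLin := by
  intro y
  let x : ℕ → ℂ := fun i =>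
    Nat.rec 0 (fun i xi => (if h : i < m then y ⟨i, h⟩ else 0) + μ * xi) i
  refine ⟨fun i => x i, funext fun i => ?_⟩
  have hx : x (i + 1) = y i + μ * x i := by simp [x]
  rw [mulVecLin_apply, sub_mulVec, smul_mulVec, Pi.sub_apply, Pi.smul_apply, Fmat_mulVec_apply,
    Gmat_mulVec_apply, Fin.val_succ, Fin.val_castSucc, hx, smul_eq_mul, add_sub_cancel_right]

theorem isUnit_of_isUpperTriangular {n K : Type*} [Fintype n] [LinearOrder n] [Field K]
    {A : Matrix n n K} (hA : A.IsUpperTriangular) (hd : ∀ i, A i i ≠ 0) : IsUnit A := by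
  rw [isUnit_iff_isUnit_det, det_of_isUpperTriangular hA, isUnit_iff_ne_zero]
  exact Finset.prod_ne_zero_iff.2 fun i _ => hd i

theorem isUpperTriangular_Jmat (h : ℕ) (μ : ℂ) : (Jmat h μ).IsUpperTriangular := by
  intro i j hij
  have hlt : (j : ℕ) < i := hij
  rw [Jmat, of_apply, if_neg (by omega), if_neg (by omega)]

theorem mem_span_single_of_forall_eq_zero {n K : Type*} [DecidableEq n] [Semiring K] {i : n}
    {x : n → K} (hx : ∀ j ≠ i, x j = 0) : x ∈ Submodule.span K {(Pi.single i 1 : n → K)} := by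
  refine Submodule.mem_span_singleton.2 ⟨x i, ?_⟩
  rw [← Pi.single_smul, smul_eq_mul, mul_one]
  exact funext fun j => by
    rcases eq_or_ne j i with rfl | hj
    · exact Pi.single_eq_same j _
    · rw [Pi.single_eq_of_ne hj, hx j hj]

theorem single_mem_chainHeads_Jmat (hk : k < h) :
    Pi.single ⟨0, by omega⟩ 1 ∈ chainHeads .free (Jmat h 0).mulVecLin
      (1 : Matrix (Fin h) (Fin h) ℂ).mulVecLin k := by
  refine ⟨fun i j => if (j : ℕ) = i then 1 else 0, ⟨fun i hi => ?_, ?_⟩, trivial, ?_⟩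
  · ext j
    simp only [mulVecLin_apply, Jmat_zero_mulVec_apply, one_mulVec, Nat.add_right_cancel_iff]
    split_ifs <;> first | omega | rfl
  · ext j
    simp [Jmat_zero_mulVec_apply]
  · ext j
    simp [Pi.single_apply, Fin.ext_iff]

theorem headRank_Jmat_zero_one (h k : ℕ) :
    headRank .free (Jmat h 0).mulVecLin (1 : Matrix (Fin h) (Fin h) ℂ).mulVecLin k =
      if k < h then 1 else 0 := by
  have happly {x y : Fin h → ℂ} (hxy : Jmat h 0 *ᵥ x = y) (i : ℕ) (hi : i + 1 < h) :
      x ⟨i + 1, hi⟩ = y ⟨i, by omega⟩ := by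
    rw [← hxy, Jmat_zero_mulVec_apply, dif_pos hi]
  split_ifs with hk
  · refine headRank_eq_one (by simp) (fun x hx => mem_span_single_of_forall_eq_zero ?_)
      (single_mem_chainHeads_Jmat hk)
    rintro ⟨_ | i, hi⟩ hne
    · exact absurd rfl hne
    · exact happly hx i hi
  · refine headRank_eq_zero_of_forall fun c hc _ => ?_
    have hstep (i : ℕ) (hi : i < k) : c i = Jmat h 0 *ᵥ c (i + 1) := by
      simpa using (hc.chain i (by omega)).symm
    have hzero (i : ℕ) (hi : i ≤ k) : ∀ j : Fin h, h ≤ j + (k - i) → c i j = 0 := by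
      induction hi using Nat.decreasingInduction with
      | self => exact fun j hj => absurd hj (by omega)
      | of_succ i hi ih =>
        intro j hj
        rw [hstep i hi, Jmat_zero_mulVec_apply]
        split_ifs
        · exact ih _ (by simp only; omega)
        · rfl
    exact funext fun j => hzero 0 (Nat.zero_le k) j (by omega)

theorem headRank_Jmat_zero_transpose_one (h k : ℕ) :
    headRank .free (Jmat h 0)ᵀ.mulVecLin (1 : Matrix (Fin h) (Fin h) ℂ).mulVecLin k =
      if k < h then 1 else 0 := by
  have hrev : (Jmat h 0).submatrix Fin.revPerm Fin.revPerm = (Jmat h 0)ᵀ := by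
    ext i j
    simp only [Jmat, transpose_apply, submatrix_apply, of_apply, Fin.revPerm_apply, Fin.val_rev]
    exact if_congr (by omega) rfl (if_congr (by omega) rfl rfl)
  rw [← headRank_Jmat_zero_one, ← headRank_mulVecLin_submatrix Fin.revPerm Fin.revPerm (Jmat h 0),
    hrev, submatrix_one_equiv]

theorem single_mem_chainHeads_Gmat (hk : m < k) :
    Pi.single (Fin.last m) 1 ∈ chainHeads .zero (Gmat m).mulVecLin (Fmat m).mulVecLin k := by
  refine ⟨fun i j => if (j : ℕ) + i = m then 1 else 0, ⟨fun i _ => ?_, ?_⟩, ?_, ?_⟩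
  · ext j
    simp [Gmat_mulVec_apply, Fmat_mulVec_apply, add_assoc, add_comm 1]
  · ext j
    simp [Gmat_mulVec_apply, j.is_lt.ne]
  · exact (Submodule.mem_bot ℂ).2 (funext fun j => if_neg (by omega))
  · ext j
    simp [Pi.single_apply, Fin.ext_iff]

theorem headRank_Gmat_Fmat (m k : ℕ) :
    headRank .zero (Gmat m).mulVecLin (Fmat m).mulVecLin k = if m < k then 1 else 0 := by
  have hker (x : Fin (m + 1) → ℂ) (hx : Gmat m *ᵥ x = 0) (j : Fin (m + 1)) (hj : j ≠ Fin.last m) :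
      x j = 0 := by
    obtain ⟨j, rfl⟩ := Fin.exists_castSucc_eq.2 hj
    rw [← Gmat_mulVec_apply x, hx, Pi.zero_apply]
  split_ifs with hk
  · exact headRank_eq_one (by simp) (fun x hx => mem_span_single_of_forall_eq_zero (hker x hx))
      (single_mem_chainHeads_Gmat hk)
  · refine headRank_eq_zero_of_forall fun c hc hck => ?_
    have hslide (i : ℕ) : ∀ (j : ℕ) (_ : i ≤ k) (hj : j + i = m),
        c i ⟨j, by omega⟩ = c 0 (Fin.last m) := by
      induction i with
      | zero =>
        rintro j - rfl
        rfl
      | succ i ih =>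
        intro j hi hj
        have hstep := congrFun (hc.chain i (by omega)) ⟨j, by omega⟩
        rw [mulVecLin_apply, mulVecLin_apply, Gmat_mulVec_apply, Fmat_mulVec_apply] at hstep
        exact hstep.trans (ih (j + 1) (by omega) (by omega))
    have hlast : c 0 (Fin.last m) = 0 := by
      rw [← hslide k (m - k) le_rfl (by omega), (Submodule.mem_bot ℂ).1 hck, Pi.zero_apply]
    ext j
    rcases eq_or_ne j (Fin.last m) with rfl | hj
    · exact hlast
    · exact hker _ hc.head j hj

end BlockChains

section BlockMultiplicities

/-- The Kronecker block of size `h` for the eigenvalue `o`, whose skew-symmetric double is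
`Hb o h`. -/
def kronBlk : Option ℂ → (h : ℕ) → Pencil h h
  | some μ, h => Eblk h μ
  | none, h => EInfblk h

theorem probe_kronBlk_self (o : Option ℂ) (h : ℕ) : (kronBlk o h).probe o = (Jmat h 0, 1) := by
  cases o with
  | none => rfl
  | some μ => simp [kronBlk, Pencil.probe, Eblk, Jmat_eq_add_smul_one h μ]

theorem isUnit_probe_kronBlk_of_ne {o o' : Option ℂ} (ho : o' ≠ o) (h : ℕ) :
    IsUnit ((kronBlk o' h).probe o).1 := by
  match o, o', ho with
  | none, none, ho => exact absurd rfl ho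
  | none, some _, _ => exact isUnit_one
  | some μ, none, _ =>
    refine isUnit_of_isUpperTriangular (A := 1 - μ • Jmat h 0) (fun i j hij => ?_) fun i => ?_
    · rw [Matrix.sub_apply, Matrix.smul_apply, blockTriangular_one hij,
        isUpperTriangular_Jmat h 0 hij, smul_zero, sub_zero]
    · simp [Jmat]
  | some μ, some ν, ho =>
    refine isUnit_of_isUpperTriangular (A := Jmat h ν - μ • 1) (fun i j hij => ?_) fun i => ?_
    · rw [Matrix.sub_apply, Matrix.smul_apply, blockTriangular_one hij,
        isUpperTriangular_Jmat h ν hij, smul_zero, sub_zero]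
    · simpa [Jmat, sub_eq_zero] using fun hν => ho (congrArg some hν)

theorem surjective_probe_Lblk (o : Option ℂ) (m : ℕ) :
    Function.Surjective ((Lblk m).probe o).1.mulVecLin := by
  cases o with
  | none => exact Gmat_surjective m
  | some μ => exact Fmat_sub_smul_Gmat_surjective m μ

open Pencil

variable {o : Option ℂ} {t : ChainEnd}

theorem probeRank_Hb (o' : Option ℂ) (h k : ℕ) :
    (Hb o' h).toPencil.probeRank o t k =
      headRank t ((kronBlk o' h).probe o).1.mulVecLin ((kronBlk o' h).probe o).2.mulVecLin k +
        headRank t ((kronBlk o' h).probe o).1ᵀ.mulVecLin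
          ((kronBlk o' h).probe o).2ᵀ.mulVecLin k := by
  rw [← probeRank_skewPair]
  cases o' <;> rfl

theorem probeRank_Hb_self (o : Option ℂ) (h k : ℕ) :
    (Hb o h).toPencil.probeRank o .free k = if k < h then 2 else 0 := by
  simp only [probeRank_Hb, probe_kronBlk_self, transpose_one, headRank_Jmat_zero_one,
    headRank_Jmat_zero_transpose_one]
  split_ifs <;> rfl

theorem probeRank_Hb_of_ne {o' : Option ℂ} (ho : o' ≠ o) (h k : ℕ) :
    (Hb o' h).toPencil.probeRank o t k = 0 := by
  have hunit := isUnit_probe_kronBlk_of_ne ho h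
  rw [probeRank_Hb, headRank_eq_zero_of_injective_left (mulVec_injective_of_isUnit hunit),
    headRank_eq_zero_of_injective_left
      (mulVec_injective_of_isUnit ((isUnit_transpose _).2 hunit))]

theorem probeRank_none_zero_Hb (o : Option ℂ) (h k : ℕ) :
    (Hb o h).toPencil.probeRank none .zero k = 0 := by
  rcases eq_or_ne o none with rfl | ho
  · have hone := mulVec_injective_of_isUnit (isUnit_one (M := Matrix (Fin h) (Fin h) ℂ))
    simp only [probeRank_Hb, probe_kronBlk_self, transpose_one]
    rw [headRank_zero_eq_zero_of_injective_right hone,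
      headRank_zero_eq_zero_of_injective_right hone]
  · exact probeRank_Hb_of_ne ho h k

theorem probeRank_M (o : Option ℂ) (m k : ℕ) :
    (SBlock.M m).toPencil.probeRank o t k = (Lblk m).probeRank o t k := by
  refine (probeRank_skewPair (Lblk m)).trans ?_
  rw [headRank_eq_zero_of_injective_left
    (injective_mulVecLin_transpose (surjective_probe_Lblk o m)), add_zero, probeRank]

theorem probeRank_free_M (o : Option ℂ) (m k : ℕ) :
    (SBlock.M m).toPencil.probeRank o .free k = 1 := by
  have hrank := headRank_free_add_finrank_of_surjective (β := ((Lblk m).probe o).2.mulVecLin)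
    (k := k) (surjective_probe_Lblk o m)
  rw [Module.finrank_fin_fun, Module.finrank_fin_fun, add_comm] at hrank
  rw [probeRank_M, probeRank]
  exact Nat.add_left_cancel hrank

theorem probeRank_none_zero_M (m k : ℕ) :
    (SBlock.M m).toPencil.probeRank none .zero k = if m < k then 1 else 0 := by
  rw [probeRank_M]
  exact headRank_Gmat_Fmat m k

theorem SBlock.exists_eq_Hb_or_eq_M (d : SBlock) : (∃ o h, d = Hb o h) ∨ ∃ m, d = M m := by
  cases d with
  | H h μ => exact .inl ⟨some μ, h, rfl⟩
  | K h => exact .inl ⟨none, h, rfl⟩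
  | M m => exact .inr ⟨m, rfl⟩

theorem SBlock.valid.exists_eq_Hb_succ_or_eq_M {d : SBlock} (hd : d.valid) :
    (∃ o h, d = Hb o (h + 1)) ∨ ∃ m, d = M m := by
  cases d with
  | H h μ => exact .inl ⟨some μ, h - 1, by rw [Nat.sub_add_cancel hd]; rfl⟩
  | K h => exact .inl ⟨none, h - 1, by rw [Nat.sub_add_cancel hd]; rfl⟩
  | M m => exact .inr ⟨m, rfl⟩

theorem Hb_inj {o o' : Option ℂ} {h h' : ℕ} : Hb o h = Hb o' h' ↔ o = o' ∧ h = h' := by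
  cases o <;> cases o' <;> simp [Hb, and_comm]

theorem Hb_ne_M (o : Option ℂ) (h m : ℕ) : Hb o h ≠ .M m := by
  cases o <;> simp [Hb]

open Classical in
theorem probeRank_free_eq_succ_add (o : Option ℂ) (h : ℕ) (d : SBlock) :
    d.toPencil.probeRank o .free h =
      d.toPencil.probeRank o .free (h + 1) + 2 * if d = Hb o (h + 1) then 1 else 0 := by
  rcases d.exists_eq_Hb_or_eq_M with ⟨o', h', rfl⟩ | ⟨m, rfl⟩
  · rcases eq_or_ne o' o with rfl | ho
    · simp only [probeRank_Hb_self, Hb_inj, true_and]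
      split_ifs <;> omega
    · simp [probeRank_Hb_of_ne ho, Hb_inj, ho]
  · simp [probeRank_free_M, (Hb_ne_M o (h + 1) m).symm]

open Classical in
theorem probeRank_none_zero_succ_eq_add (m : ℕ) (d : SBlock) :
    d.toPencil.probeRank none .zero (m + 1) =
      d.toPencil.probeRank none .zero m + 1 * if d = .M m then 1 else 0 := by
  rcases d.exists_eq_Hb_or_eq_M with ⟨o, h, rfl⟩ | ⟨m', rfl⟩
  · simp [probeRank_none_zero_Hb, Hb_ne_M]
  · simp only [probeRank_none_zero_M, SBlock.M.injEq]
    split_ifs <;> omega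

end BlockMultiplicities

section Uniqueness

theorem sum_map_ite_eq_count {α : Type*} [DecidableEq α] (s : Multiset α) (a : α) :
    (s.map fun x => if x = a then 1 else 0).sum = s.count a := by
  induction s using Multiset.induction_on with
  | empty => simp
  | cons x s ih => rw [Multiset.map_cons, Multiset.sum_cons, ih, Multiset.count_cons, add_comm,
      if_congr eq_comm rfl rfl]

variable {n : ℕ} {P : Pencil n n} {s s₁ s₂ : Multiset SBlock}

theorem RepresentsC.probeRank_eq (hs : RepresentsC P s) (o : Option ℂ) (t : ChainEnd) (k : ℕ) :
    P.probeRank o t k = (s.map fun d => d.toPencil.probeRank o t k).sum := by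
  obtain ⟨-, l, rfl, rfl, hl⟩ := hs
  rw [Multiset.map_coe, Multiset.sum_coe, ← Pencil.probeRank_spencilOfList]
  exact hl.probeRank_eq

open Classical in
theorem RepresentsC.probeRank_eq_add_mul_count (hs : RepresentsC P s) {b : SBlock} {o : Option ℂ}
    {t : ChainEnd} {k k' c : ℕ} (hb : ∀ d : SBlock, d.toPencil.probeRank o t k =
      d.toPencil.probeRank o t k' + c * if d = b then 1 else 0) :
    P.probeRank o t k = P.probeRank o t k' + c * s.count b := by
  simp only [hs.probeRank_eq, hb, Multiset.sum_map_add, Multiset.sum_map_mul_left,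
    sum_map_ite_eq_count]

open Classical in
theorem RepresentsC.count_eq (h₁ : RepresentsC P s₁) (h₂ : RepresentsC P s₂) {b : SBlock}
    (hb : b.valid) : s₁.count b = s₂.count b := by
  rcases hb.exists_eq_Hb_succ_or_eq_M with ⟨o, h, rfl⟩ | ⟨m, rfl⟩
  · have e₁ := h₁.probeRank_eq_add_mul_count (probeRank_free_eq_succ_add o h)
    have e₂ := h₂.probeRank_eq_add_mul_count (probeRank_free_eq_succ_add o h)
    omega
  · have e₁ := h₁.probeRank_eq_add_mul_count (probeRank_none_zero_succ_eq_add m)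
    have e₂ := h₂.probeRank_eq_add_mul_count (probeRank_none_zero_succ_eq_add m)
    omega

theorem RepresentsC.unique (h₁ : RepresentsC P s₁) (h₂ : RepresentsC P s₂) : s₁ = s₂ := by
  classical
  ext b
  by_cases hb : b.valid
  · exact h₁.count_eq h₂ hb
  · rw [Multiset.count_eq_zero_of_notMem fun h => hb (h₁.1 b h),
      Multiset.count_eq_zero_of_notMem fun h => hb (h₂.1 b h)]

end Uniqueness

/-- **Thompson canonical form** (Theorem 2.5): every skew-symmetric `n × n`
complex matrix pencil is congruent to a direct sum of blocks `H_h(μ)`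
(`μ ∈ ℂ`), `K_k`, `M_m`, and this direct sum is uniquely determined up to
permutation of the summands (i.e. the multiset of blocks is unique). -/
theorem thompson_canonical_form {n : ℕ} (P : Pencil n n) (hP : Pencil.IsSkew P) :
    (∃ s : Multiset SBlock, RepresentsC P s) ∧
      ∀ s₁ s₂ : Multiset SBlock, RepresentsC P s₁ → RepresentsC P s₂ → s₁ = s₂ := by
  exact ⟨hP.exists_representsC, fun _ _ h₁ h₂ => h₁.unique h₂⟩
end
end
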